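/- arXiv:1804.07213 — 2 statements merged into one kernel-verified Lean document; each statement's English description precedes it below -/
import Mathlib

section
/- Consider F(x) = f(x) + P₁(x) − P₂(x) with P₂ having globally Lipschitz gradient, and define E(x, y, w) = f(x) + P₁(x) − ⟨x, y⟩ + P₂*(y) + (L/2)‖x − w‖². If F is a KL function with exponent 1/2, then E is a KL function with exponent 1/2. -/
/-!
A subgradient `(ξ, η, ζ)` of `E` at `(x, y, w)` satisfies `ξ - ∇f(x) + y - L(x - w) ∈ ∂P₁(x)`,
`x + η ∈ ∂P₂*(y)` and `ζ = L(w - x)`; since `P₂` is differentiable, the second condition reads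
`y = ∇P₂(x + η)`. Hence `E(x, y, w) - F(x)` is the Bregman distance of `P₂` from `x + η` to `x` plus
`(L/2)‖x - w‖²`, which lies between `0` and a multiple of `‖(ξ, η, ζ)‖²`, and
`ξ + ζ + y - ∇P₂(x)` is a subgradient of `F` at `x` of norm at most a multiple of `‖(ξ, η, ζ)‖`.
At a critical point of `E` the values of `E` and `F` therefore agree, and a KL inequality for `F`
with exponent `α ≥ 1/2` absorbs the quadratic excess. At a point that is not critical, the
subgradients of `E` at nearby points with nearby values are bounded away from `0`.
-/

open Filter Topology Set Metric Bornology
open scoped RealInnerProductSpace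

noncomputable section

abbrev Eucl (n : ℕ) := EuclideanSpace ℝ (Fin n)

variable {H : Type*} [NormedAddCommGroup H] [InnerProductSpace ℝ H]

/-- Fréchet (regular) subgradient of an extended-real-valued function. -/
def FrechetSubgradAt (h : H → EReal) (v x : H) : Prop :=
  ∀ ε : ℝ, 0 < ε →
    ∀ᶠ y in 𝓝[≠] x, h x + ((⟪v, y - x⟫ - ε * ‖y - x‖ : ℝ) : EReal) ≤ h y

/-- Limiting (Mordukhovich) subdifferential. -/
def limSubdiff (h : H → EReal) (x : H) : Set H :=
  {v | ∃ xs vs : ℕ → H,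
    Tendsto xs atTop (𝓝 x) ∧
    Tendsto (fun k => h (xs k)) atTop (𝓝 (h x)) ∧
    Tendsto vs atTop (𝓝 v) ∧
    ∀ k, FrechetSubgradAt h (vs k) (xs k)}

/-- Convex subgradient of a real-valued function. -/
def ConvexSubgradAt (g : H → ℝ) (v x : H) : Prop :=
  ∀ y, g x + ⟪v, y - x⟫ ≤ g y

/-- Convex subgradient of an extended-real-valued function. -/
def ConvexSubgradAtE (g : H → EReal) (v x : H) : Prop :=
  ∀ y, g x + ((⟪v, y - x⟫ : ℝ) : EReal) ≤ g y

/-- Convex conjugate of a real-valued function. -/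
def conjE (g : H → ℝ) (y : H) : EReal :=
  ⨆ x : H, ((⟪x, y⟫ - g x : ℝ) : EReal)

/-- `P` is proper, closed (lsc) and convex. -/
def ProperClosedConvexE (P : H → EReal) : Prop :=
  (∀ x, P x ≠ ⊥) ∧ (∃ x, P x ≠ ⊤) ∧ LowerSemicontinuous P ∧
  (∀ x y : H, ∀ t : ℝ, t ∈ Ioo (0:ℝ) 1 →
    P (t • x + (1 - t) • y) ≤ (t : EReal) * P x + ((1 - t : ℝ) : EReal) * P y)

/-- KL property with exponent `α` at a point. -/
def KLExpAt (h : H → EReal) (α : ℝ) (x₀ : H) : Prop :=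
  ∃ c > (0:ℝ), ∃ ε > (0:ℝ), ∃ a > (0:ℝ), ∀ x : H,
    ‖x - x₀‖ ≤ ε → h x₀ < h x → h x < h x₀ + (a : EReal) →
    (limSubdiff h x).Nonempty →
    1 ≤ c * (1 - α) * ((h x).toReal - (h x₀).toReal) ^ (-α) * infDist 0 (limSubdiff h x)

/-- KL function with exponent `α`. -/
def IsKLWithExp (h : H → EReal) (α : ℝ) : Prop :=
  ∀ x₀ : H, (limSubdiff h x₀).Nonempty → KLExpAt h α x₀

/-- KL property (general desingularizing function) at a point. -/
def KLAt (h : H → EReal) (x₀ : H) : Prop :=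
  ∃ a > (0:ℝ), ∃ U ∈ 𝓝 x₀, ∃ φ φd : ℝ → ℝ,
    ContinuousOn φ (Ico 0 a) ∧ ConcaveOn ℝ (Ico 0 a) φ ∧ φ 0 = 0 ∧
    (∀ s ∈ Ico (0:ℝ) a, 0 ≤ φ s) ∧
    (∀ s ∈ Ioo (0:ℝ) a, HasDerivAt φ (φd s) s ∧ 0 < φd s) ∧
    ∀ x ∈ U, h x₀ < h x → h x < h x₀ + (a : EReal) → (limSubdiff h x).Nonempty →
      1 ≤ φd ((h x).toReal - (h x₀).toReal) * infDist 0 (limSubdiff h x)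

/-- KL function. -/
def IsKLFun (h : H → EReal) : Prop :=
  ∀ x₀ : H, (limSubdiff h x₀).Nonempty → KLAt h x₀

/-- The potential function `E(x,y,w) = f(x) + P₁(x) - ⟨x,y⟩ + P₂*(y) + L/2 ‖x-w‖²`. -/
def potE (f : H → ℝ) (P₁ : H → EReal) (P₂ : H → ℝ) (L : ℝ) (x y w : H) : EReal :=
  ((f x : ℝ) : EReal) + P₁ x - ((⟪x, y⟫ : ℝ) : EReal) + conjE P₂ y
    + ((L / 2 * ‖x - w‖ ^ 2 : ℝ) : EReal)

/-- The pDCAe iteration: `ξ^{k+1} ∈ ∂P₂(x^k)`, `u^k = x^k + β_k (x^k - x^{k-1})` and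
`x^{k+1}` is the minimizer of `⟨∇f(u^k) - ξ^{k+1}, ·⟩ + L/2 ‖· - u^k‖² + P₁(·)`.
(`x⁻¹ = x⁰` is encoded by truncated subtraction in `ℕ`.) -/
def IsPDCAe (f' : H → H) (P₁ : H → EReal) (P₂ : H → ℝ) (L : ℝ) (β : ℕ → ℝ)
    (x ξ : ℕ → H) : Prop :=
  P₁ (x 0) ≠ ⊤ ∧
  (∀ k : ℕ, ConvexSubgradAt P₂ (ξ (k + 1)) (x k)) ∧
  (∀ k : ℕ, ∀ z : H,
    ((⟪f' (x k + β k • (x k - x (k - 1))) - ξ (k + 1), x (k + 1)⟫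
        + L / 2 * ‖x (k + 1) - (x k + β k • (x k - x (k - 1)))‖ ^ 2 : ℝ) : EReal)
      + P₁ (x (k + 1))
      ≤ ((⟪f' (x k + β k • (x k - x (k - 1))) - ξ (k + 1), z⟫
        + L / 2 * ‖z - (x k + β k • (x k - x (k - 1)))‖ ^ 2 : ℝ) : EReal) + P₁ z)

/-- Triples `(x, y, w)` with the ℓ² product inner product structure. -/
abbrev Trip (n : ℕ) := WithLp 2 (Eucl n × WithLp 2 (Eucl n × Eucl n))

def mkTrip {n : ℕ} (a b c : Eucl n) : Trip n :=
  (WithLp.equiv 2 _).symm (a, (WithLp.equiv 2 _).symm (b, c))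

/-- `potE` as a function on triples. -/
def potE3 {n : ℕ} (f : Eucl n → ℝ) (P₁ : Eucl n → EReal) (P₂ : Eucl n → ℝ) (L : ℝ)
    (p : Trip n) : EReal :=
  potE f P₁ P₂ L ((WithLp.equiv 2 _) p).1 ((WithLp.equiv 2 _) ((WithLp.equiv 2 _) p).2).1
    ((WithLp.equiv 2 _) ((WithLp.equiv 2 _) p).2).2

variable {G : Type*} [NormedAddCommGroup G] [InnerProductSpace ℝ G]

/-! ### Fréchet and limiting subgradients -/

lemma frechetSubgradAt_iff_eventually_nhds {h : H → EReal} {v x : H} :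
    FrechetSubgradAt h v x ↔ ∀ ε : ℝ, 0 < ε →
      ∀ᶠ y in 𝓝 x, h x + ((⟪v, y - x⟫ - ε * ‖y - x‖ : ℝ) : EReal) ≤ h y := by
  refine forall₂_congr fun ε _ => ?_
  rw [← nhdsNE_sup_pure x, eventually_sup]
  simp

lemma FrechetSubgradAt.mem_limSubdiff {h : H → EReal} {v x : H} (hv : FrechetSubgradAt h v x) :
    v ∈ limSubdiff h x :=
  ⟨fun _ => x, fun _ => v, tendsto_const_nhds, tendsto_const_nhds, tendsto_const_nhds, fun _ => hv⟩

lemma FrechetSubgradAt.comp_lipschitzWith_one {h : G → EReal} {φ : H → G} {v : G} {u x : H}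
    (hv : FrechetSubgradAt h v (φ x)) (hφ : LipschitzWith 1 φ)
    (hu : ∀ y, ⟪v, φ y - φ x⟫ = ⟪u, y - x⟫) : FrechetSubgradAt (fun y => h (φ y)) u x := by
  rw [frechetSubgradAt_iff_eventually_nhds] at hv ⊢
  intro ε hε
  filter_upwards [hφ.continuous.continuousAt.eventually (hv ε hε)] with y hy
  refine le_trans ?_ hy
  rw [hu]
  gcongr
  simpa using hφ.norm_sub_le y x

lemma FrechetSubgradAt.fst {h : WithLp 2 (H × G) → EReal} {v p : WithLp 2 (H × G)}
    (hv : FrechetSubgradAt h v p) :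
    FrechetSubgradAt (fun x => h (WithLp.toLp 2 (x, p.snd))) v.fst p.fst :=
  FrechetSubgradAt.comp_lipschitzWith_one (φ := fun x => WithLp.toLp 2 (x, p.snd)) hv
    (LipschitzWith.of_dist_le_mul fun x y => by simp [WithLp.prod_dist_eq_of_L2])
    fun y => by simp

lemma FrechetSubgradAt.snd {h : WithLp 2 (H × G) → EReal} {v p : WithLp 2 (H × G)}
    (hv : FrechetSubgradAt h v p) :
    FrechetSubgradAt (fun y => h (WithLp.toLp 2 (p.fst, y))) v.snd p.snd :=
  FrechetSubgradAt.comp_lipschitzWith_one (φ := fun y => WithLp.toLp 2 (p.fst, y)) hv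
    (LipschitzWith.of_dist_le_mul fun x y => by simp [WithLp.prod_dist_eq_of_L2])
    fun y => by simp

lemma FrechetSubgradAt.add_hasGradientAt [CompleteSpace H] {h : H → EReal} {g : H → ℝ}
    {v g' x : H} (hv : FrechetSubgradAt h v x) (hg : HasGradientAt g g' x) :
    FrechetSubgradAt (fun y => h y + (g y : EReal)) (v + g') x := by
  rw [frechetSubgradAt_iff_eventually_nhds] at hv ⊢
  intro ε hε
  have hg_lower := (hasGradientAt_iff_isLittleO.mp hg).def (half_pos hε)
  filter_upwards [hv (ε / 2) (half_pos hε), hg_lower] with y hy hgy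
  have hreal : g x + (⟪v + g', y - x⟫ - ε * ‖y - x‖)
      ≤ (⟪v, y - x⟫ - ε / 2 * ‖y - x‖) + g y := by
    rw [inner_add_left]
    linarith [neg_le_of_abs_le hgy]
  calc h x + g x + ((⟪v + g', y - x⟫ - ε * ‖y - x‖ : ℝ) : EReal)
      = h x + ((g x + (⟪v + g', y - x⟫ - ε * ‖y - x‖) : ℝ) : EReal) := by
        rw [add_assoc, ← EReal.coe_add]
    _ ≤ h x + (((⟪v, y - x⟫ - ε / 2 * ‖y - x‖) + g y : ℝ) : EReal) := by gcongr
    _ = h x + ((⟪v, y - x⟫ - ε / 2 * ‖y - x‖ : ℝ) : EReal) + g y := by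
        rw [EReal.coe_add, add_assoc]
    _ ≤ h y + g y := by gcongr

lemma hasGradientAt_neg [CompleteSpace H] {g : H → ℝ} {g' x : H} (hg : HasGradientAt g g' x) :
    HasGradientAt (fun y => -g y) (-g') x := by
  rw [hasGradientAt_iff_hasFDerivAt, map_neg]
  exact hg.hasFDerivAt.neg

lemma FrechetSubgradAt.sub_hasGradientAt [CompleteSpace H] {h : H → EReal} {g : H → ℝ}
    {v g' x : H} (hv : FrechetSubgradAt (fun y => h y + (g y : EReal)) v x)
    (hg : HasGradientAt g g' x) : FrechetSubgradAt h (v - g') x := by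
  have hcancel : (fun y => h y + (g y : EReal) + ((-g y : ℝ) : EReal)) = h := by
    funext y
    rw [add_assoc, ← EReal.coe_add, add_neg_cancel, EReal.coe_zero, add_zero]
  simpa only [hcancel, sub_eq_add_neg] using hv.add_hasGradientAt (hasGradientAt_neg hg)

lemma frechetSubgradAt_of_hasGradientAt [CompleteSpace H] {g : H → ℝ} {g' x : H}
    (hg : HasGradientAt g g' x) : FrechetSubgradAt (fun y => (g y : EReal)) g' x := by
  have hzero : FrechetSubgradAt (fun _ : H => (0 : EReal)) 0 x := fun ε hε =>
    Eventually.of_forall fun y => by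
      rw [inner_zero_left, zero_add, EReal.coe_nonpos]
      nlinarith [norm_nonneg (y - x)]
  simpa only [zero_add] using hzero.add_hasGradientAt hg

lemma ConvexSubgradAtE.frechetSubgradAt {P : H → EReal} {s x : H} (hs : ConvexSubgradAtE P s x) :
    FrechetSubgradAt P s x := fun ε hε => Eventually.of_forall fun y => by
  refine le_trans ?_ (hs y)
  gcongr
  linarith [mul_nonneg hε.le (norm_nonneg (y - x))]

/-- The graph of the Fréchet subdifferential of `h`, augmented by the values of `h`; the limiting
subdifferential is described by its closure. -/
def frechetGraph (h : H → EReal) : Set (H × EReal × H) :=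
  {q | q.2.1 = h q.1 ∧ FrechetSubgradAt h q.2.2 q.1}

lemma mem_limSubdiff_iff_mem_closure_frechetGraph {h : H → EReal} {v x : H} :
    v ∈ limSubdiff h x ↔ (x, h x, v) ∈ closure (frechetGraph h) := by
  rw [mem_closure_iff_seq_limit]
  constructor
  · rintro ⟨xs, vs, hxs, hh, hvs, hF⟩
    exact ⟨fun k => (xs k, h (xs k), vs k), fun k => ⟨rfl, hF k⟩,
      hxs.prodMk_nhds (hh.prodMk_nhds hvs)⟩
  · rintro ⟨q, hq, hlim⟩
    have hvalue : (fun k => (q k).2.1) = fun k => h (q k).1 := funext fun k => (hq k).1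
    refine ⟨fun k => (q k).1, fun k => (q k).2.2, hlim.fst_nhds, ?_, hlim.snd_nhds.snd_nhds,
      fun k => (hq k).2⟩
    rw [← hvalue]
    exact hlim.snd_nhds.fst_nhds

/-! ### Convex functions and conjugates -/

/-- Jensen convexity of an extended-real-valued function, in the form in which it occurs in
`ProperClosedConvexE`. -/
def ConvexE (P : H → EReal) : Prop :=
  ∀ x y : H, ∀ t : ℝ, t ∈ Ioo (0:ℝ) 1 →
    P (t • x + (1 - t) • y) ≤ (t : EReal) * P x + ((1 - t : ℝ) : EReal) * P y

lemma ProperClosedConvexE.convexE {P : H → EReal} (hP : ProperClosedConvexE P) : ConvexE P :=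
  hP.2.2.2

lemma convexE_coe {g : H → ℝ} (hg : ConvexOn ℝ univ g) : ConvexE fun x => (g x : EReal) :=
  fun x y t ht => by
    beta_reduce
    exact_mod_cast hg.2 (mem_univ x) (mem_univ y) ht.1.le (sub_nonneg.mpr ht.2.le)
      (add_sub_cancel t 1)

/-- On a segment issuing from `x`, convexity bounds the increment of `P` linearly, so the
first-order inequality of a Fréchet subgradient propagates from small steps to full ones. -/
lemma FrechetSubgradAt.convexSubgradAtE {P : H → EReal} {v x : H} (hv : FrechetSubgradAt P v x)
    (hP : ConvexE P) (hbot : P x ≠ ⊥) (htop : P x ≠ ⊤) : ConvexSubgradAtE P v x := by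
  intro z
  lift P x to ℝ using ⟨htop, hbot⟩ with a ha
  refine EReal.le_of_forall_lt_iff_le.mp fun b hb => ?_
  norm_cast
  refine le_of_forall_pos_le_add fun ε hε => ?_
  set δ := ε / (‖z - x‖ + 1)
  have hδ : 0 < δ := by positivity
  have hδ_le : δ * ‖z - x‖ ≤ ε := by
    rw [div_mul_eq_mul_div, div_le_iff₀ (by positivity)]
    gcongr
    linarith
  have hray : Tendsto (fun t : ℝ => t • z + (1 - t) • x) (𝓝[>] 0) (𝓝 x) :=
    ((by fun_prop : Continuous fun t : ℝ => t • z + (1 - t) • x).tendsto' 0 x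
      (by simp)).mono_left nhdsWithin_le_nhds
  obtain ⟨t, hFrechet, ht⟩ := ((hray.eventually
    (frechetSubgradAt_iff_eventually_nhds.mp hv δ hδ)).and (Ioo_mem_nhdsGT one_pos)).exists
  have hstep : t • z + (1 - t) • x - x = t • (z - x) := by module
  have hJensen : P (t • z + (1 - t) • x) ≤ ((t * b + (1 - t) * a : ℝ) : EReal) := by
    refine (hP z x t ht).trans ?_
    rw [← ha]
    push_cast
    gcongr
    exact_mod_cast ht.1.le
  have hreal : a + (t * ⟪v, z - x⟫ - δ * (t * ‖z - x‖)) ≤ t * b + (1 - t) * a := by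
    have := hFrechet.trans hJensen
    rw [hstep, inner_smul_right, norm_smul, Real.norm_of_nonneg ht.1.le, ← ha] at this
    exact_mod_cast this
  nlinarith [ht.1]

lemma ConvexSubgradAtE.of_tendsto {P : H → EReal} (hP : LowerSemicontinuous P) {xs ss : ℕ → H}
    {x s : H} (hx : Tendsto xs atTop (𝓝 x)) (hs : Tendsto ss atTop (𝓝 s))
    (h : ∀ᶠ k in atTop, ConvexSubgradAtE P (ss k) (xs k)) : ConvexSubgradAtE P s x := by
  intro z
  refine EReal.le_of_forall_lt_iff_le.mp fun b hb => ?_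
  have hbound : Tendsto (fun k => ((b - ⟪ss k, z - xs k⟫ : ℝ) : EReal)) atTop
      (𝓝 ((b - ⟪s, z - x⟫ : ℝ) : EReal)) :=
    continuous_coe_real_ereal.continuousAt.tendsto.comp
      (tendsto_const_nhds.sub (hs.inner (tendsto_const_nhds.sub hx)))
  have hepi : ∀ᶠ k in atTop, P (xs k) ≤ ((b - ⟪ss k, z - xs k⟫ : ℝ) : EReal) := by
    filter_upwards [h] with k hk
    rw [EReal.coe_sub]
    exact EReal.le_sub_iff_add_le (by simp) (by simp) |>.mpr ((hk z).trans hb.le)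
  have hlim : P x ≤ ((b - ⟪s, z - x⟫ : ℝ) : EReal) :=
    (lowerSemicontinuous_iff_isClosed_epigraph.mp hP).mem_of_tendsto (hx.prodMk_nhds hbound) hepi
  rw [EReal.coe_sub] at hlim
  exact EReal.le_sub_iff_add_le (by simp) (by simp) |>.mp hlim

section Gradient

variable [CompleteSpace H] {g : H → ℝ} {g' x : H}

lemma convexSubgradAt_of_hasGradientAt (hconv : ConvexOn ℝ univ g) (hg : HasGradientAt g g' x) :
    ConvexSubgradAt g g' x := fun y => by
  exact_mod_cast (frechetSubgradAt_of_hasGradientAt hg).convexSubgradAtE (convexE_coe hconv)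
    (EReal.coe_ne_bot _) (EReal.coe_ne_top _) y

lemma FrechetSubgradAt.eq_of_hasGradientAt {v : H}
    (hv : FrechetSubgradAt (fun y => (g y : EReal)) v x) (hg : HasGradientAt g g' x) : v = g' := by
  have hzero : FrechetSubgradAt (fun _ : H => ((0 : ℝ) : EReal)) (v - g') x := by
    refine FrechetSubgradAt.sub_hasGradientAt ?_ hg
    simpa only [EReal.coe_zero, zero_add] using hv
  have hself := hzero.convexSubgradAtE (convexE_coe (convexOn_const 0 convex_univ))
    (EReal.coe_ne_bot _) (EReal.coe_ne_top _) (x + (v - g'))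
  rw [add_sub_cancel_left] at hself
  norm_cast at hself
  rw [zero_add] at hself
  exact sub_eq_zero.mp (real_inner_self_nonpos.mp hself)

lemma ConvexSubgradAt.eq_of_hasGradientAt {v : H} (hv : ConvexSubgradAt g v x)
    (hg : HasGradientAt g g' x) : v = g' := by
  have hvE : ConvexSubgradAtE (fun y => (g y : EReal)) v x := fun y => by
    beta_reduce
    exact_mod_cast hv y
  exact hvE.frechetSubgradAt.eq_of_hasGradientAt hg

end Gradient

lemma ConvexSubgradAt.sub_sub_inner_le {g : H → ℝ} {g' : H → H} {ℓ : NNReal} {x : H}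
    (hx : ConvexSubgradAt g (g' x) x) (hlip : LipschitzWith ℓ g') (z : H) :
    g x - g z - ⟪g' z, x - z⟫ ≤ ℓ * ‖x - z‖ ^ 2 :=
  calc g x - g z - ⟪g' z, x - z⟫ ≤ ⟪g' x - g' z, x - z⟫ := by
        have := hx z
        rw [← neg_sub x z, inner_neg_right] at this
        rw [inner_sub_left]
        linarith
    _ ≤ ‖g' x - g' z‖ * ‖x - z‖ := real_inner_le_norm _ _
    _ ≤ ℓ * ‖x - z‖ * ‖x - z‖ := by gcongr; exact hlip.norm_sub_le x z
    _ = ℓ * ‖x - z‖ ^ 2 := by ring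

lemma le_conjE (g : H → ℝ) (x y : H) : ((⟪x, y⟫ - g x : ℝ) : EReal) ≤ conjE g y :=
  le_iSup (fun x : H => ((⟪x, y⟫ - g x : ℝ) : EReal)) x

lemma conjE_ne_bot (g : H → ℝ) (y : H) : conjE g y ≠ ⊥ :=
  ne_bot_of_le_ne_bot (EReal.coe_ne_bot _) (le_conjE g 0 y)

lemma convexE_conjE (g : H → ℝ) : ConvexE (conjE g) := by
  intro y z t ht
  refine iSup_le fun u => ?_
  have hsplit : ⟪u, t • y + (1 - t) • z⟫ - g u
      = t * (⟪u, y⟫ - g u) + (1 - t) * (⟪u, z⟫ - g u) := by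
    rw [inner_add_right, inner_smul_right, inner_smul_right]
    ring
  rw [hsplit, EReal.coe_add, EReal.coe_mul, EReal.coe_mul]
  have ht0 : (0 : EReal) ≤ (t : EReal) := EReal.coe_nonneg.mpr ht.1.le
  have ht1 : (0 : EReal) ≤ ((1 - t : ℝ) : EReal) := EReal.coe_nonneg.mpr (sub_nonneg.mpr ht.2.le)
  exact add_le_add (mul_le_mul_of_nonneg_left (le_conjE g u y) ht0)
    (mul_le_mul_of_nonneg_left (le_conjE g u z) ht1)

lemma ConvexSubgradAt.conjE_eq {g : H → ℝ} {y z : H} (hy : ConvexSubgradAt g y z) :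
    conjE g y = ((⟪z, y⟫ - g z : ℝ) : EReal) := by
  refine le_antisymm (iSup_le fun u => ?_) (le_conjE g z y)
  have := hy u
  rw [inner_sub_right, real_inner_comm u, real_inner_comm z] at this
  norm_cast
  linarith

/-- Testing the subgradient of `g*` at the single point `∇g(z)` already gives the equality case of
Fenchel–Young at `(z, y)`, that is, `y ∈ ∂g(z)`. -/
lemma ConvexSubgradAtE.eq_of_conjE [CompleteSpace H] {g : H → ℝ} {g' y z : H}
    (hz : ConvexSubgradAtE (conjE g) z y) (hconv : ConvexOn ℝ univ g)
    (hg : HasGradientAt g g' z) : y = g' := by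
  have hgrad := convexSubgradAt_of_hasGradientAt hconv hg
  refine ConvexSubgradAt.eq_of_hasGradientAt (fun u => ?_) hg
  have htest : ((⟪u, y⟫ - g u + ⟪z, g' - y⟫ : ℝ) : EReal) ≤ ((⟪z, g'⟫ - g z : ℝ) : EReal) := by
    rw [← hgrad.conjE_eq, EReal.coe_add]
    exact (add_le_add_left (le_conjE g u y) _).trans (hz g')
  rw [EReal.coe_le_coe_iff, inner_sub_right] at htest
  rw [inner_sub_right, real_inner_comm u, real_inner_comm z]
  linarith

/-! ### The KL property -/

lemma exists_real_of_lt_of_lt_add_coe {r s : EReal} {a : ℝ} (hrs : r < s)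
    (hsa : s < r + (a : EReal)) :
    ∃ r' s' : ℝ, r = r' ∧ s = s' ∧ r' < s' ∧ s' < r' + a := by
  have hr_bot : r ≠ ⊥ := by
    rintro rfl
    simp at hsa
  lift r to ℝ using ⟨ne_top_of_lt hrs, hr_bot⟩
  lift s to ℝ using ⟨ne_top_of_lt hsa, ne_bot_of_gt hrs⟩
  exact ⟨r, s, rfl, rfl, by exact_mod_cast hrs, by exact_mod_cast hsa⟩

lemma one_le_mul_rpow_neg_mul_iff {α c s d : ℝ} (hs : 0 < s) :
    1 ≤ c * s ^ (-α) * d ↔ s ^ α ≤ c * d := by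
  rw [Real.rpow_neg hs.le, mul_right_comm, ← div_eq_mul_inv, one_le_div (Real.rpow_pos_of_pos hs α)]

lemma klExpAt_iff_exists_rpow_le {h : H → EReal} {α : ℝ} {x₀ : H} (hα : α < 1) :
    KLExpAt h α x₀ ↔ ∃ C > (0:ℝ), ∃ ε > (0:ℝ), ∃ a > (0:ℝ), ∀ x v : H, ‖x - x₀‖ ≤ ε →
      h x₀ < h x → h x < h x₀ + (a : EReal) → v ∈ limSubdiff h x →
      ((h x).toReal - (h x₀).toReal) ^ α ≤ C * ‖v‖ := by
  have hα' : 0 < 1 - α := sub_pos.mpr hα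
  have hgap {x : H} {a : ℝ} (hlt : h x₀ < h x) (hlta : h x < h x₀ + (a : EReal)) :
      0 < (h x).toReal - (h x₀).toReal := by
    obtain ⟨r, s, hr, hs, hrs, -⟩ := exists_real_of_lt_of_lt_add_coe hlt hlta
    simpa [hr, hs] using hrs
  constructor
  · rintro ⟨c, hc, ε, hε, a, ha, hKL⟩
    refine ⟨c * (1 - α), by positivity, ε, hε, a, ha, fun x v hx hlt hlta hv => ?_⟩
    refine ((one_le_mul_rpow_neg_mul_iff (hgap hlt hlta)).mp (hKL x hx hlt hlta ⟨v, hv⟩)).trans ?_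
    gcongr
    simpa using infDist_le_dist_of_mem (x := (0 : H)) hv
  · rintro ⟨C, hC, ε, hε, a, ha, hbound⟩
    refine ⟨C / (1 - α), by positivity, ε, hε, a, ha, fun x hx hlt hlta hne => ?_⟩
    rw [div_mul_cancel₀ _ hα'.ne', one_le_mul_rpow_neg_mul_iff (hgap hlt hlta),
      ← div_le_iff₀' hC, le_infDist hne]
    intro v hv
    rw [dist_zero_left, div_le_iff₀' hC]
    exact hbound x v hx hlt hlta hv

lemma klExpAt_of_eq_top {h : H → EReal} {α : ℝ} {x₀ : H} (htop : h x₀ = ⊤) : KLExpAt h α x₀ :=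
  ⟨1, one_pos, 1, one_pos, 1, one_pos, fun _ _ hlt => absurd (htop ▸ hlt) not_top_lt⟩

lemma exists_pos_eventually_le_norm_of_zero_notMem_limSubdiff {h : H → EReal} {x₀ : H}
    (h0 : (0 : H) ∉ limSubdiff h x₀) :
    ∃ δ > (0:ℝ), ∀ᶠ q in 𝓝 (x₀, h x₀), q.2 = h q.1 → ∀ v ∈ limSubdiff h q.1, δ ≤ ‖v‖ := by
  have hcompl : (closure (frechetGraph h))ᶜ ∈ 𝓝 (x₀, h x₀, (0 : H)) :=
    isClosed_closure.isOpen_compl.mem_nhds (mem_limSubdiff_iff_mem_closure_frechetGraph.not.mp h0)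
  obtain ⟨U, hU, V, hV, hUV⟩ := mem_nhds_prod_iff.mp hcompl
  obtain ⟨T, hT, W, hW, hTW⟩ := mem_nhds_prod_iff.mp hV
  obtain ⟨δ, hδ, hball⟩ := Metric.mem_nhds_iff.mp hW
  refine ⟨δ, hδ, ?_⟩
  filter_upwards [prod_mem_nhds hU hT] with ⟨x, r⟩ hxr hr v hv
  by_contra! hvδ
  obtain rfl : r = h x := hr
  exact hUV (mk_mem_prod hxr.1 (hTW (mk_mem_prod hxr.2 (hball (mem_ball_zero_iff.mpr hvδ)))))
    (mem_limSubdiff_iff_mem_closure_frechetGraph.mp hv)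

lemma klExpAt_of_zero_notMem_limSubdiff {h : H → EReal} {α : ℝ} {x₀ : H} (hα0 : 0 ≤ α)
    (hα1 : α < 1) (h0 : (0 : H) ∉ limSubdiff h x₀) : KLExpAt h α x₀ := by
  by_cases htop : h x₀ = ⊤
  · exact klExpAt_of_eq_top htop
  by_cases hbot : h x₀ = ⊥
  · refine ⟨1, one_pos, 1, one_pos, 1, one_pos, fun x _ _ hlta => ?_⟩
    simp [hbot] at hlta
  obtain ⟨δ, hδ, hnorm⟩ := exists_pos_eventually_le_norm_of_zero_notMem_limSubdiff h0
  obtain ⟨U, hU, T, hT, hUT⟩ := mem_nhds_prod_iff.mp hnorm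
  obtain ⟨ε, hε, hεU⟩ := Metric.nhds_basis_closedBall.mem_iff.mp hU
  obtain ⟨b, hb⟩ : ∃ b : ℝ, h x₀ = b := ⟨_, (EReal.coe_toReal htop hbot).symm⟩
  have hcoe : ((↑) : ℝ → EReal) ⁻¹' T ∈ 𝓝 b :=
    continuous_coe_real_ereal.continuousAt.preimage_mem_nhds (hb ▸ hT)
  obtain ⟨a, ha, haT⟩ := Metric.mem_nhds_iff.mp hcoe
  refine (klExpAt_iff_exists_rpow_le hα1).mpr ⟨δ⁻¹, inv_pos.mpr hδ, ε, hε, min a 1, by positivity,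
    fun x v hx hlt hlta hv => ?_⟩
  obtain ⟨b', s, hb', hs, hbs, hsa⟩ := exists_real_of_lt_of_lt_add_coe hlt hlta
  obtain rfl : b = b' := by exact_mod_cast hb.symm.trans hb'
  have hsT : h x ∈ T := by
    rw [hs]
    exact haT (by rw [Metric.mem_ball, Real.dist_eq, abs_lt]; grind)
  have hδv : δ ≤ ‖v‖ := hUT (mk_mem_prod (hεU (mem_closedBall_iff_norm.mpr hx)) hsT) rfl v hv
  rw [hs, hb, EReal.toReal_coe, EReal.toReal_coe]
  calc (s - b) ^ α ≤ 1 := Real.rpow_le_one (by linarith) (by linarith [min_le_right a 1]) hα0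
    _ ≤ δ⁻¹ * ‖v‖ := (one_le_inv_mul₀ hδ).mpr hδv

lemma rpow_le_of_le_add_mul_sq {α s t A K a N : ℝ} (hα0 : 1 / 2 ≤ α) (hα1 : α ≤ 1) (hs : 0 ≤ s)
    (ht : 0 ≤ t) (hK : 0 ≤ K) (hA : 0 ≤ A) (hN : 0 ≤ N) (hsa : s ≤ a) (hst : s ≤ t + K * N ^ 2)
    (htA : t ^ α ≤ A * N) : s ^ α ≤ (A + K ^ α + a ^ α) * N := by
  have hα : 0 ≤ α := by linarith
  have ha : 0 ≤ a := hs.trans hsa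
  rcases le_total N 1 with hN1 | hN1
  · have hpow : (N ^ 2) ^ α ≤ N := by
      rw [← Real.rpow_natCast_mul hN]
      exact (Real.rpow_le_rpow_of_exponent_ge' hN hN1 zero_le_one
        (by push_cast; linarith)).trans_eq (Real.rpow_one N)
    calc s ^ α ≤ (t + K * N ^ 2) ^ α := by gcongr
      _ ≤ t ^ α + (K * N ^ 2) ^ α := Real.rpow_add_le_add_rpow ht (by positivity) hα hα1
      _ = t ^ α + K ^ α * (N ^ 2) ^ α := by rw [Real.mul_rpow hK (by positivity)]
      _ ≤ A * N + K ^ α * N := by gcongr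
      _ = (A + K ^ α) * N := by ring
      _ ≤ (A + K ^ α + a ^ α) * N :=
        mul_le_mul_of_nonneg_right (le_add_of_nonneg_right (by positivity)) hN
  · calc s ^ α ≤ a ^ α * 1 := by rw [mul_one]; gcongr
      _ ≤ (A + K ^ α + a ^ α) * N :=
        mul_le_mul (le_add_of_nonneg_left (by positivity)) hN1 zero_le_one (by positivity)

/-- Quadratic growth has KL exponent exactly `1 / 2`, so no smaller exponent survives the excess. -/
lemma KLExpAt.of_quadratic_excess {h : H → EReal} {g : G → EReal} {π : G → H} {α K M : ℝ} {p₀ : G}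
    (hKL : KLExpAt h α (π p₀)) (hα0 : 1 / 2 ≤ α) (hα1 : α < 1) (hπ : ContinuousAt π p₀)
    (hK : 0 ≤ K) (hM : 0 ≤ M) (hg₀ : g p₀ = h (π p₀))
    (hvalue : ∀ p v, v ∈ limSubdiff g p → g p ≠ ⊤ →
      ∃ r : ℝ, 0 ≤ r ∧ r ≤ K * ‖v‖ ^ 2 ∧ g p = h (π p) + r)
    (hsubgrad : ∀ p v, v ∈ limSubdiff g p → g p ≠ ⊤ →
      ∃ u ∈ limSubdiff h (π p), ‖u‖ ≤ M * ‖v‖) : KLExpAt g α p₀ := by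
  obtain ⟨C, hC, ε, hε, a, ha, hbound⟩ := (klExpAt_iff_exists_rpow_le hα1).mp hKL
  obtain ⟨δ, hδ, hball⟩ := Metric.nhds_basis_closedBall.mem_iff.mp
    (hπ.preimage_mem_nhds (closedBall_mem_nhds (π p₀) hε))
  refine (klExpAt_iff_exists_rpow_le hα1).mpr
    ⟨C * M + K ^ α + a ^ α, by positivity, δ, hδ, a, ha, fun p v hp hlt hlta hv => ?_⟩
  obtain ⟨r, hr0, hrK, hr⟩ := hvalue p v hv (ne_top_of_lt hlta)
  obtain ⟨u, hu, huM⟩ := hsubgrad p v hv (ne_top_of_lt hlta)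
  obtain ⟨b, s, hb, hs, hbs, hsa⟩ := exists_real_of_lt_of_lt_add_coe hlt hlta
  have hπp₀ : h (π p₀) = b := hg₀.symm.trans hb
  have hπp : h (π p) = ((s - r : ℝ) : EReal) := by
    rw [EReal.coe_sub, ← hs, hr, EReal.add_sub_cancel_right]
  have hpπ : ‖π p - π p₀‖ ≤ ε := mem_closedBall_iff_norm.mp (hball (mem_closedBall_iff_norm.mpr hp))
  have hpow : (max (s - r - b) 0) ^ α ≤ C * M * ‖v‖ := by
    rcases le_or_gt (s - r) b with hle | hgt
    · rw [max_eq_right (by linarith), Real.zero_rpow (by linarith)]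
      positivity
    · have hKLp := hbound (π p) u hpπ (by rw [hπp₀, hπp]; exact_mod_cast hgt)
        (by rw [hπp₀, hπp]; exact_mod_cast (by linarith : s - r < b + a)) hu
      rw [hπp₀, hπp, EReal.toReal_coe, EReal.toReal_coe] at hKLp
      rw [max_eq_left (by linarith), mul_assoc]
      exact hKLp.trans (mul_le_mul_of_nonneg_left huM hC.le)
  rw [hs, hb, EReal.toReal_coe, EReal.toReal_coe]
  exact rpow_le_of_le_add_mul_sq hα0 hα1.le (by linarith) (le_max_right _ _) hK (by positivity)
    (norm_nonneg v) (by linarith) (by linarith [le_max_left (s - r - b) 0]) hpow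

lemma IsKLWithExp.of_quadratic_excess {h : H → EReal} {g : G → EReal} {π : G → H} {α K M : ℝ}
    (hKL : IsKLWithExp h α) (hα0 : 1 / 2 ≤ α) (hα1 : α < 1) (hπ : Continuous π) (hK : 0 ≤ K)
    (hM : 0 ≤ M)
    (hvalue : ∀ p v, v ∈ limSubdiff g p → g p ≠ ⊤ →
      ∃ r : ℝ, 0 ≤ r ∧ r ≤ K * ‖v‖ ^ 2 ∧ g p = h (π p) + r)
    (hsubgrad : ∀ p v, v ∈ limSubdiff g p → g p ≠ ⊤ →
      ∃ u ∈ limSubdiff h (π p), ‖u‖ ≤ M * ‖v‖) : IsKLWithExp g α := by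
  intro p₀ _
  by_cases htop : g p₀ = ⊤
  · exact klExpAt_of_eq_top htop
  by_cases h0 : (0 : G) ∈ limSubdiff g p₀
  · obtain ⟨r, hr0, hrK, hr⟩ := hvalue p₀ 0 h0 htop
    obtain rfl : r = 0 := le_antisymm (by simpa using hrK) hr0
    obtain ⟨u, hu, -⟩ := hsubgrad p₀ 0 h0 htop
    exact (hKL _ ⟨u, hu⟩).of_quadratic_excess hα0 hα1 hπ.continuousAt hK hM (by simpa using hr)
      hvalue hsubgrad
  · exact klExpAt_of_zero_notMem_limSubdiff (by linarith) hα1 h0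

/-! ### Subgradients of the potential -/

/-- The difference-of-convex objective `F = f + P₁ - P₂`. -/
def dcObj (f : H → ℝ) (P₁ : H → EReal) (P₂ : H → ℝ) (y : H) : EReal :=
  ((f y : ℝ) : EReal) + P₁ y - ((P₂ y : ℝ) : EReal)

/-- The potential `potE` as a function of one variable `p = (x, y, w)` in the ℓ² product; for
`H = Eucl n` this is `potE3`. -/
def potETriple (f : H → ℝ) (P₁ : H → EReal) (P₂ : H → ℝ) (L : ℝ)
    (p : WithLp 2 (H × WithLp 2 (H × H))) : EReal :=
  potE f P₁ P₂ L p.fst p.snd.fst p.snd.snd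

/-- First-order conditions describing the subgradients `v = (ξ, η, ζ)` of `potETriple` at
`p = (x, y, w)`, where `y ∈ ∂P₂(x + η)` stands for `x + η ∈ ∂P₂*(y)`. -/
structure PotEStationary (f' : H → H) (P₁ : H → EReal) (p₂' : H → H) (L : ℝ)
    (p v : WithLp 2 (H × WithLp 2 (H × H))) : Prop where
  convexSubgradAtE : ConvexSubgradAtE P₁ (v.fst - (f' p.fst - p.snd.fst + L • (p.fst - p.snd.snd)))
    p.fst
  eq_grad : p.snd.fst = p₂' (p.fst + v.snd.fst)
  eq_smul : v.snd.snd = L • (p.snd.snd - p.fst)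

lemma potE_eq_add_coe (f : H → ℝ) (P₁ : H → EReal) (P₂ : H → ℝ) (L : ℝ) (x y w : H) :
    potE f P₁ P₂ L x y w =
      P₁ x + conjE P₂ y + ((f x - ⟪x, y⟫ + L / 2 * ‖x - w‖ ^ 2 : ℝ) : EReal) := by
  rw [potE, EReal.coe_add, EReal.coe_sub]
  simp only [sub_eq_add_neg]
  ac_rfl

lemma ne_top_of_potE_ne_top {f : H → ℝ} {P₁ : H → EReal} {P₂ : H → ℝ} {L : ℝ} {x y w : H}
    (hbot : P₁ x ≠ ⊥) (hE : potE f P₁ P₂ L x y w ≠ ⊤) : P₁ x ≠ ⊤ ∧ conjE P₂ y ≠ ⊤ := by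
  rw [potE_eq_add_coe] at hE
  have hsum : P₁ x + conjE P₂ y ≠ ⊤ := fun h => hE (by rw [h, EReal.top_add_coe])
  exact (EReal.add_ne_top_iff_ne_top₂ hbot (conjE_ne_bot P₂ y)).mp hsum

lemma hasGradientAt_sub_inner_add_sq [CompleteSpace H] {f : H → ℝ} {g x : H}
    (hf : HasGradientAt f g x) (L : ℝ) (y w : H) :
    HasGradientAt (fun z => f z - ⟪z, y⟫ + L / 2 * ‖z - w‖ ^ 2) (g - y + L • (x - w)) x := by
  rw [hasGradientAt_iff_hasFDerivAt] at hf ⊢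
  have hinner := (hasFDerivAt_id (𝕜 := ℝ) x).inner ℝ (hasFDerivAt_const y x)
  have hsq := ((hasFDerivAt_id (𝕜 := ℝ) x).sub_const w).norm_sq.const_mul (L / 2)
  refine ((hf.sub hinner).add hsq).congr_fderiv ?_
  ext u
  simp only [id_eq, map_sub, ContinuousLinearMap.comp_id, add_apply, sub_apply,
    InnerProductSpace.toDual_apply_apply, ContinuousLinearMap.comp_apply,
    ContinuousLinearMap.prod_apply, ContinuousLinearMap.id_apply, zero_apply,
    fderivInnerCLM_apply, inner_zero_right, real_inner_comm, zero_add, smul_apply,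
    coe_innerSL_apply, nsmul_eq_mul, Nat.cast_ofNat, smul_eq_mul, map_add, map_smul]
  ring

section Stationarity

variable [CompleteSpace H] {f : H → ℝ} {f' : H → H} {P₁ : H → EReal} {P₂ : H → ℝ} {p₂' : H → H}
  {L : ℝ}

lemma FrechetSubgradAt.convexSubgradAtE_of_potE {ξ x y w : H}
    (hξ : FrechetSubgradAt (fun z => potE f P₁ P₂ L z y w) ξ x)
    (hfgrad : HasGradientAt f (f' x) x) (hP₁ : ConvexE P₁) (hbot : P₁ x ≠ ⊥) (htop : P₁ x ≠ ⊤)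
    (hconj : conjE P₂ y ≠ ⊤) : ConvexSubgradAtE P₁ (ξ - (f' x - y + L • (x - w))) x := by
  lift conjE P₂ y to ℝ using ⟨hconj, conjE_ne_bot P₂ y⟩ with b hb
  simp only [potE_eq_add_coe, ← hb, add_assoc, ← EReal.coe_add] at hξ
  refine (hξ.sub_hasGradientAt ?_).convexSubgradAtE hP₁ hbot htop
  rw [hasGradientAt_iff_hasFDerivAt]
  exact (hasGradientAt_sub_inner_add_sq hfgrad L y w).hasFDerivAt.const_add b

lemma FrechetSubgradAt.eq_grad_of_potE {η x y w : H}
    (hη : FrechetSubgradAt (fun z => potE f P₁ P₂ L x z w) η y)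
    (hconv : ConvexOn ℝ univ P₂) (hP₂grad : ∀ z, HasGradientAt P₂ (p₂' z) z)
    (hbot : P₁ x ≠ ⊥) (htop : P₁ x ≠ ⊤) (hconj : conjE P₂ y ≠ ⊤) : y = p₂' (x + η) := by
  lift P₁ x to ℝ using ⟨htop, hbot⟩ with a ha
  simp only [potE_eq_add_coe, ← ha, add_comm (a : EReal), add_assoc, ← EReal.coe_add] at hη
  have hgrad : HasGradientAt (fun z => f x - ⟪x, z⟫ + (L / 2 * ‖x - w‖ ^ 2 + a)) (-x) y := by
    rw [hasGradientAt_iff_hasFDerivAt, map_neg]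
    exact (((InnerProductSpace.toDual ℝ H x).hasFDerivAt (x := y)).const_sub (f x)).add_const _
  have hsub := (hη.sub_hasGradientAt hgrad).convexSubgradAtE (convexE_conjE P₂) (conjE_ne_bot P₂ y)
    hconj
  rw [sub_neg_eq_add, add_comm] at hsub
  exact hsub.eq_of_conjE hconv (hP₂grad _)

lemma FrechetSubgradAt.eq_smul_of_potE {ζ x y w : H}
    (hζ : FrechetSubgradAt (fun z => potE f P₁ P₂ L x y z) ζ w) (hbot : P₁ x ≠ ⊥)
    (htop : P₁ x ≠ ⊤) (hconj : conjE P₂ y ≠ ⊤) : ζ = L • (w - x) := by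
  lift P₁ x to ℝ using ⟨htop, hbot⟩ with a ha
  lift conjE P₂ y to ℝ using ⟨hconj, conjE_ne_bot P₂ y⟩ with b hb
  simp only [potE_eq_add_coe, ← ha, ← hb, ← EReal.coe_add] at hζ
  refine hζ.eq_of_hasGradientAt ?_
  simpa [norm_sub_rev, add_assoc] using
    hasGradientAt_sub_inner_add_sq (hasGradientAt_const w (a + b + (f x - ⟪x, y⟫))) L 0 x

lemma FrechetSubgradAt.potEStationary {p v : WithLp 2 (H × WithLp 2 (H × H))}
    (hv : FrechetSubgradAt (potETriple f P₁ P₂ L) v p)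
    (hfgrad : ∀ z, HasGradientAt f (f' z) z) (hP₁ : ConvexE P₁) (hbot : ∀ x, P₁ x ≠ ⊥)
    (hP₂conv : ConvexOn ℝ univ P₂) (hP₂grad : ∀ z, HasGradientAt P₂ (p₂' z) z)
    (hE : potETriple f P₁ P₂ L p ≠ ⊤) : PotEStationary f' P₁ p₂' L p v := by
  obtain ⟨htop, hconj⟩ := ne_top_of_potE_ne_top (hbot p.fst) hE
  exact ⟨hv.fst.convexSubgradAtE_of_potE (hfgrad _) hP₁ (hbot _) htop hconj,
    hv.snd.fst.eq_grad_of_potE hP₂conv hP₂grad (hbot _) htop hconj,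
    hv.snd.snd.eq_smul_of_potE (hbot _) htop hconj⟩

end Stationarity

lemma PotEStationary.of_tendsto {f' : H → H} {P₁ : H → EReal} {p₂' : H → H} {L : ℝ}
    {ps vs : ℕ → WithLp 2 (H × WithLp 2 (H × H))} {p v : WithLp 2 (H × WithLp 2 (H × H))}
    (hf' : Continuous f') (hP₁ : LowerSemicontinuous P₁) (hp₂' : Continuous p₂')
    (hp : Tendsto ps atTop (𝓝 p)) (hv : Tendsto vs atTop (𝓝 v))
    (h : ∀ᶠ k in atTop, PotEStationary f' P₁ p₂' L (ps k) (vs k)) :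
    PotEStationary f' P₁ p₂' L p v := by
  have hx := WithLp.continuous_fst 2 H (WithLp 2 (H × H)) |>.tendsto _ |>.comp hp
  have hyw := WithLp.continuous_snd 2 H (WithLp 2 (H × H)) |>.tendsto _ |>.comp hp
  have hξ := WithLp.continuous_fst 2 H (WithLp 2 (H × H)) |>.tendsto _ |>.comp hv
  have hηζ := WithLp.continuous_snd 2 H (WithLp 2 (H × H)) |>.tendsto _ |>.comp hv
  have hy := WithLp.continuous_fst 2 H H |>.tendsto _ |>.comp hyw
  have hw := WithLp.continuous_snd 2 H H |>.tendsto _ |>.comp hyw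
  have hη := WithLp.continuous_fst 2 H H |>.tendsto _ |>.comp hηζ
  have hζ := WithLp.continuous_snd 2 H H |>.tendsto _ |>.comp hηζ
  exact ⟨.of_tendsto hP₁ hx (hξ.sub (((hf'.tendsto _ |>.comp hx).sub hy).add
      ((hx.sub hw).const_smul L))) (h.mono fun _ hk => hk.convexSubgradAtE),
    tendsto_nhds_unique_of_eventuallyEq hy (hp₂'.tendsto _ |>.comp (hx.add hη))
      (h.mono fun _ hk => hk.eq_grad),
    tendsto_nhds_unique_of_eventuallyEq hζ ((hw.sub hx).const_smul L)
      (h.mono fun _ hk => hk.eq_smul)⟩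

lemma potEStationary_of_mem_limSubdiff [CompleteSpace H] {f : H → ℝ} {f' : H → H}
    {P₁ : H → EReal} {P₂ : H → ℝ} {p₂' : H → H} {L : ℝ}
    {p v : WithLp 2 (H × WithLp 2 (H × H))} (hfgrad : ∀ z, HasGradientAt f (f' z) z)
    (hf' : Continuous f') (hP₁ : ProperClosedConvexE P₁) (hP₂conv : ConvexOn ℝ univ P₂)
    (hP₂grad : ∀ z, HasGradientAt P₂ (p₂' z) z) (hp₂' : Continuous p₂')
    (hv : v ∈ limSubdiff (potETriple f P₁ P₂ L) p) (hE : potETriple f P₁ P₂ L p ≠ ⊤) :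
    PotEStationary f' P₁ p₂' L p v := by
  obtain ⟨ps, vs, hp, hEp, hvs, hF⟩ := hv
  exact .of_tendsto hf' hP₁.2.2.1 hp₂' hp hvs <| (hEp.eventually_ne hE).mono fun k hk =>
    (hF k).potEStationary hfgrad hP₁.convexE hP₁.1 hP₂conv hP₂grad hk

namespace PotEStationary

variable {f : H → ℝ} {f' : H → H} {P₁ : H → EReal} {P₂ : H → ℝ} {p₂' : H → H} {L : ℝ}
  {ℓ : NNReal} {p v : WithLp 2 (H × WithLp 2 (H × H))}

lemma norm_grad_sub_le (h : PotEStationary f' P₁ p₂' L p v) (hlip : LipschitzWith ℓ p₂') :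
    ‖p.snd.fst - p₂' p.fst‖ ≤ ℓ * ‖v.snd.fst‖ := by
  rw [h.eq_grad]
  simpa using hlip.norm_sub_le (p.fst + v.snd.fst) p.fst

lemma norm_sub_eq (h : PotEStationary f' P₁ p₂' L p v) (hL : 0 < L) :
    ‖p.fst - p.snd.snd‖ = ‖v.snd.snd‖ / L := by
  rw [h.eq_smul, norm_smul, Real.norm_of_nonneg hL.le, norm_sub_rev, mul_div_cancel_left₀ _ hL.ne']

/-- The excess is the Bregman distance of `P₂` from `x + η` to `x` plus the proximal term. -/
lemma potETriple_eq_dcObj_add (h : PotEStationary f' P₁ p₂' L p v)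
    (hsub : ConvexSubgradAt P₂ (p₂' (p.fst + v.snd.fst)) (p.fst + v.snd.fst)) :
    potETriple f P₁ P₂ L p = dcObj f P₁ P₂ p.fst +
      ((P₂ p.fst - P₂ (p.fst + v.snd.fst) - ⟪p₂' (p.fst + v.snd.fst), p.fst - (p.fst + v.snd.fst)⟫
        + L / 2 * ‖p.fst - p.snd.snd‖ ^ 2 : ℝ) : EReal) := by
  rw [potETriple, potE_eq_add_coe, h.eq_grad, hsub.conjE_eq, dcObj,
    add_comm (f p.fst : EReal), sub_eq_add_neg (_ + _ : EReal), ← EReal.coe_neg]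
  simp only [add_assoc, ← EReal.coe_add]
  congr 2
  rw [inner_add_left, sub_add_cancel_left, inner_neg_right, real_inner_comm v.snd.fst]
  ring

lemma exists_potETriple_eq_dcObj_add [CompleteSpace H] (h : PotEStationary f' P₁ p₂' L p v)
    (hL : 0 < L) (hP₂conv : ConvexOn ℝ univ P₂) (hP₂grad : ∀ z, HasGradientAt P₂ (p₂' z) z)
    (hlip : LipschitzWith ℓ p₂') :
    ∃ r : ℝ, 0 ≤ r ∧ r ≤ (ℓ + 1 / (2 * L)) * ‖v‖ ^ 2 ∧
      potETriple f P₁ P₂ L p = dcObj f P₁ P₂ p.fst + r := by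
  have hsub (z : H) : ConvexSubgradAt P₂ (p₂' z) z :=
    convexSubgradAt_of_hasGradientAt hP₂conv (hP₂grad z)
  refine ⟨_, ?_, ?_, h.potETriple_eq_dcObj_add (hsub _)⟩
  · have := hsub (p.fst + v.snd.fst) p.fst
    have : 0 ≤ L / 2 * ‖p.fst - p.snd.snd‖ ^ 2 := by positivity
    linarith
  · calc _ ≤ ℓ * ‖p.fst - (p.fst + v.snd.fst)‖ ^ 2 + L / 2 * ‖p.fst - p.snd.snd‖ ^ 2 := by
          gcongr
          exact (hsub p.fst).sub_sub_inner_le hlip _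
      _ = ℓ * ‖v.snd.fst‖ ^ 2 + 1 / (2 * L) * ‖v.snd.snd‖ ^ 2 := by
          rw [sub_add_cancel_left, norm_neg, h.norm_sub_eq hL]
          field_simp
      _ ≤ ℓ * ‖v‖ ^ 2 + 1 / (2 * L) * ‖v‖ ^ 2 := by
          gcongr
          · exact (WithLp.norm_fst_le _ v.snd).trans (WithLp.norm_snd_le _ v)
          · exact (WithLp.norm_snd_le _ v.snd).trans (WithLp.norm_snd_le _ v)
      _ = (ℓ + 1 / (2 * L)) * ‖v‖ ^ 2 := by ring

lemma exists_mem_limSubdiff_dcObj [CompleteSpace H] (h : PotEStationary f' P₁ p₂' L p v)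
    (hfgrad : HasGradientAt f (f' p.fst) p.fst) (hP₂grad : HasGradientAt P₂ (p₂' p.fst) p.fst)
    (hlip : LipschitzWith ℓ p₂') :
    ∃ u ∈ limSubdiff (dcObj f P₁ P₂) p.fst, ‖u‖ ≤ (2 + ℓ) * ‖v‖ := by
  have hF := (h.convexSubgradAtE.frechetSubgradAt.add_hasGradientAt hfgrad).add_hasGradientAt
    (hasGradientAt_neg hP₂grad)
  have hobj : (fun y => P₁ y + (f y : EReal) + ((-P₂ y : ℝ) : EReal)) = dcObj f P₁ P₂ := by
    funext y
    rw [dcObj, add_comm (P₁ y), sub_eq_add_neg, EReal.coe_neg]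
  have hu : v.fst - (f' p.fst - p.snd.fst + L • (p.fst - p.snd.snd)) + f' p.fst + -p₂' p.fst
      = v.fst + v.snd.snd + (p.snd.fst - p₂' p.fst) := by
    rw [h.eq_smul]
    module
  rw [hobj, hu] at hF
  refine ⟨_, hF.mem_limSubdiff, ?_⟩
  calc ‖v.fst + v.snd.snd + (p.snd.fst - p₂' p.fst)‖
      ≤ ‖v.fst‖ + ‖v.snd.snd‖ + ‖p.snd.fst - p₂' p.fst‖ := norm_add₃_le
    _ ≤ ‖v‖ + ‖v‖ + ℓ * ‖v‖ := by
        gcongr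
        · exact WithLp.norm_fst_le _ v
        · exact (WithLp.norm_snd_le _ v.snd).trans (WithLp.norm_snd_le _ v)
        · refine (h.norm_grad_sub_le hlip).trans ?_
          gcongr
          exact (WithLp.norm_fst_le _ v.snd).trans (WithLp.norm_snd_le _ v)
    _ = (2 + ℓ) * ‖v‖ := by ring

end PotEStationary

theorem KL_half_F_implies_KL_half_E_general [CompleteSpace H] {f : H → ℝ} {f' : H → H}
    {P₁ : H → EReal} {P₂ : H → ℝ} {p₂' : H → H} {L α : ℝ} {ℓ : NNReal} (hα0 : 1 / 2 ≤ α)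
    (hα1 : α < 1) (hL : 0 < L) (hfgrad : ∀ y, HasGradientAt f (f' y) y) (hf' : Continuous f')
    (hP₁ : ProperClosedConvexE P₁) (hP₂conv : ConvexOn ℝ univ P₂)
    (hP₂grad : ∀ y, HasGradientAt P₂ (p₂' y) y) (hP₂lip : LipschitzWith ℓ p₂')
    (hKL : IsKLWithExp (dcObj f P₁ P₂) α) : IsKLWithExp (potETriple f P₁ P₂ L) α := by
  have hstat : ∀ p v, v ∈ limSubdiff (potETriple f P₁ P₂ L) p → potETriple f P₁ P₂ L p ≠ ⊤ →
      PotEStationary f' P₁ p₂' L p v := fun p v hv hE =>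
    potEStationary_of_mem_limSubdiff hfgrad hf' hP₁ hP₂conv hP₂grad hP₂lip.continuous hv hE
  exact hKL.of_quadratic_excess hα0 hα1 (WithLp.continuous_fst 2 H (WithLp 2 (H × H)))
    (by positivity) (by positivity)
    (fun p v hv hE =>
      (hstat p v hv hE).exists_potETriple_eq_dcObj_add hL hP₂conv hP₂grad hP₂lip)
    (fun p v hv hE =>
      (hstat p v hv hE).exists_mem_limSubdiff_dcObj (hfgrad _) (hP₂grad _) hP₂lip)

/-- Theorem 4.2(ii): if `F = f + P₁ - P₂` is a KL function with exponent `1/2`, then so is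
the potential `E(x,y,w) = f(x) + P₁(x) - ⟨x,y⟩ + P₂*(y) + L/2‖x-w‖²`. -/
theorem KL_half_F_implies_KL_half_E
    {n : ℕ} (f : Eucl n → ℝ) (f' : Eucl n → Eucl n) (P₁ : Eucl n → EReal)
    (P₂ : Eucl n → ℝ) (p₂' : Eucl n → Eucl n) (L : ℝ)
    (hL : 0 < L)
    (hfconv : ConvexOn ℝ Set.univ f)
    (hfgrad : ∀ y, HasGradientAt f (f' y) y)
    (hflip : ∀ y z, ‖f' y - f' z‖ ≤ L * ‖y - z‖)
    (hP₁ : ProperClosedConvexE P₁)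
    (hP₂cont : Continuous P₂)
    (hP₂conv : ConvexOn ℝ Set.univ P₂)
    (hP₂grad : ∀ y, HasGradientAt P₂ (p₂' y) y)
    (hP₂lip : ∃ ℓ ≥ (0:ℝ), ∀ u v, ‖p₂' u - p₂' v‖ ≤ ℓ * ‖u - v‖)
    (hKL : IsKLWithExp
      (fun y : Eucl n => ((f y : ℝ) : EReal) + P₁ y - ((P₂ y : ℝ) : EReal)) (1 / 2)) :
    IsKLWithExp (potE3 f P₁ P₂ L) (1 / 2) := by
  obtain ⟨ℓ, -, hp₂'⟩ := hP₂lip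
  have lipschitzWith_of_norm_sub_le {g : Eucl n → Eucl n} {K : ℝ}
      (hg : ∀ u v, ‖g u - g v‖ ≤ K * ‖u - v‖) : LipschitzWith K.toNNReal g :=
    LipschitzWith.of_dist_le' fun u v => by simpa only [dist_eq_norm] using hg u v
  exact KL_half_F_implies_KL_half_E_general le_rfl (by norm_num) hL hfgrad
    (lipschitzWith_of_norm_sub_le hflip).continuous hP₁ hP₂conv hP₂grad
    (lipschitzWith_of_norm_sub_le hp₂') hKL
end
end

section
/- Consider F(x) = f(x) + P₁(x) − P₂(x) where f is a convex quadratic function on ℝⁿ and P₁ − P₂ is the MCP regularizer (P₁(x) = λ‖x‖₁ and P₂(x) = λ∑_{i=1}^n ∫₀^{|x_i|} min{1, t/(θλ)} dt with λ > 0, θ > 1) or the SCAD regularizer (P₁(x) = λ‖x‖₁ and P₂(x) = λ∑_{i=1}^n ∫₀^{|x_i|} [min{θλ, t} − λ]₊/((θ−1)λ) dt with λ > 0, θ > 2). Then the function E(x, y, w) = f(x) + P₁(x) − ⟨x, y⟩ + P₂*(y) + (L/2)‖x − w‖² is a KL function with exponent 1/2. -/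
/-!
The conjugate `P₂*` is computed coordinatewise: it is `κ/2 ‖y‖² + μ ‖y‖₁` on the box `|yᵢ| ≤ λ` and
`⊤` outside, with `(κ, μ) = (θ, 0)` for MCP and `(θ - 1, λ)` for SCAD. Hence `E = q + g` with `q`
quadratic (not convex, because of `⟨x, y⟩`) and `g` polyhedral.

For such a sum, let `z` be near `z₀` in the domain of `g`, and let `W` consist of the directions in
which the affine pieces and the constraints active at `z` do not separate. Then `z - z₀ ∈ W`, along
`W` the function `g` has a single slope `ℓ`, and every limiting subgradient of `E` at `z` restricts
on `W` to the derivative of the quadratic function `q + ℓ`. The Łojasiewicz inequality with exponent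
`1/2` for `q + ℓ` on `z₀ + W` then gives `E(z) - E(z₀) ≤ C ‖v‖²` for all these subgradients `v`, and
only finitely many pairs `(ℓ, W)` occur, so `C` can be chosen uniformly.
-/

open Filter Topology Set Metric Bornology
open scoped RealInnerProductSpace

noncomputable section

variable {H : Type*} [NormedAddCommGroup H] [InnerProductSpace ℝ H]

section Quadratic

variable {V V' : Type*} [NormedAddCommGroup V] [NormedSpace ℝ V]
  [NormedAddCommGroup V'] [NormedSpace ℝ V']

lemma exists_preimage_norm_le_of_finiteDimensional [FiniteDimensional ℝ V] (S : V →L[ℝ] V') :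
    ∃ K : ℝ, ∀ z, ∃ d, S d = S z ∧ ‖d‖ ≤ K * ‖S z‖ := by
  have := FiniteDimensional.complete ℝ V
  have := FiniteDimensional.complete ℝ S.range
  have hS_surj : Function.Surjective S.rangeRestrict := by
    rw [S.coe_rangeRestrict]
    exact Set.rangeFactorization_surjective
  obtain ⟨K, -, hK⟩ := S.rangeRestrict.exists_preimage_norm_le hS_surj
  refine ⟨K, fun z => ?_⟩
  obtain ⟨d, hd, hd_le⟩ := hK (S.rangeRestrict z)
  exact ⟨d, congrArg Subtype.val hd, hd_le⟩

/-- Polynomial functions of degree at most two on a normed space, convex or not. The bilinear form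
is not required to be symmetric. -/
def IsQuadratic (q : V → ℝ) : Prop :=
  ∃ (B : V →L[ℝ] V →L[ℝ] ℝ) (r : V →L[ℝ] ℝ) (c : ℝ), ∀ z, q z = B z z + r z + c

namespace IsQuadratic

variable {q q₁ q₂ : V → ℝ}

lemma of_bilinear (B : V →L[ℝ] V →L[ℝ] ℝ) : IsQuadratic fun z => B z z :=
  ⟨B, 0, 0, fun z => by simp⟩

lemma of_linear (r : V →L[ℝ] ℝ) : IsQuadratic r :=
  ⟨0, r, 0, fun z => by simp⟩

lemma const (c : ℝ) : IsQuadratic fun _ : V => c :=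
  ⟨0, 0, c, fun z => by simp⟩

lemma add (h₁ : IsQuadratic q₁) (h₂ : IsQuadratic q₂) : IsQuadratic fun z => q₁ z + q₂ z := by
  obtain ⟨B₁, r₁, c₁, h₁⟩ := h₁
  obtain ⟨B₂, r₂, c₂, h₂⟩ := h₂
  refine ⟨B₁ + B₂, r₁ + r₂, c₁ + c₂, fun z => ?_⟩
  simp only [h₁, h₂, add_apply]
  ring

lemma const_mul (a : ℝ) (hq : IsQuadratic q) : IsQuadratic fun z => a * q z := by
  obtain ⟨B, r, c, hq⟩ := hq
  refine ⟨a • B, a • r, a * c, fun z => ?_⟩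
  simp only [hq, smul_apply, smul_eq_mul]
  ring

lemma sub (h₁ : IsQuadratic q₁) (h₂ : IsQuadratic q₂) : IsQuadratic fun z => q₁ z - q₂ z := by
  simpa only [neg_one_mul, ← sub_eq_add_neg] using h₁.add (h₂.const_mul (-1))

lemma comp {q : V' → ℝ} (hq : IsQuadratic q) (A : V →L[ℝ] V') : IsQuadratic fun z => q (A z) := by
  obtain ⟨B, r, c, hq⟩ := hq
  exact ⟨B.bilinearComp A A, r.comp A, c, fun z => by simp [hq]⟩

lemma inner (A A' : V →L[ℝ] H) : IsQuadratic fun z => ⟪A z, A' z⟫ := by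
  simpa using of_bilinear ((innerSL ℝ).bilinearComp A A')

lemma norm_sq (A : V →L[ℝ] H) : IsQuadratic fun z => ‖A z‖ ^ 2 := by
  simpa only [real_inner_self_eq_norm_sq] using inner A A

lemma of_inner_linearMap [FiniteDimensional ℝ H] {f : H → ℝ} (T : H →ₗ[ℝ] H) (b : H) (c : ℝ)
    (hf : ∀ x, f x = ⟪x, T x⟫ / 2 + ⟪b, x⟫ + c) : IsQuadratic f := by
  have hTx : IsQuadratic fun x : H => ⟪x, T x⟫ :=
    inner (ContinuousLinearMap.id ℝ H) (LinearMap.toContinuousLinearMap T)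
  convert ((hTx.const_mul 2⁻¹).add (of_linear (innerSL ℝ b))).add (const c) using 2 with x
  rw [hf, innerSL_apply_apply]
  ring

lemma hasFDerivAt {B : V →L[ℝ] V →L[ℝ] ℝ} {r : V →L[ℝ] ℝ} {c : ℝ}
    (hq : ∀ z, q z = B z z + r z + c) (z : V) : HasFDerivAt q (B z + B.flip z + r) z := by
  rw [funext hq]
  refine (((B.hasFDerivAt_of_bilinear (hasFDerivAt_id z) (hasFDerivAt_id z)).add
    r.hasFDerivAt).add_const c).congr_fderiv ?_
  ext e
  simp

lemma contDiff {n : WithTop ℕ∞} (hq : IsQuadratic q) : ContDiff ℝ n q := by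
  obtain ⟨B, r, c, hq⟩ := hq
  rw [funext hq]
  fun_prop

/-- At a critical point `q` depends on the displacement only modulo the kernel of the Hessian, so
the displacement may be replaced by a preimage of the derivative of comparable norm. -/
lemma isBigO_sub_norm_fderiv_sq_of_fderiv_eq_zero [FiniteDimensional ℝ V] (hq : IsQuadratic q)
    {z₀ : V} (hz₀ : fderiv ℝ q z₀ = 0) :
    (fun z => q z - q z₀) =O[⊤] fun z => ‖fderiv ℝ q z‖ ^ 2 := by
  obtain ⟨B, r, c, hq⟩ := hq
  have hfderiv (z : V) : fderiv ℝ q z = B z + B.flip z + r := (hasFDerivAt hq z).fderiv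
  set S : V →L[ℝ] V →L[ℝ] ℝ := B + B.flip with hS
  have hS_symm (d e : V) : S d e = S e d := by simp [hS, add_comm]
  have hfderiv_eq (z : V) : fderiv ℝ q z = S (z - z₀) := by
    rw [← sub_zero (fderiv ℝ q z), ← hz₀, hfderiv, hfderiv, map_sub]
    simp only [hS, add_apply]
    abel
  have hq_sub (z : V) : q z - q z₀ = S (z - z₀) (z - z₀) / 2 := by
    have hcrit := DFunLike.congr_fun ((hfderiv z₀).symm.trans hz₀) (z - z₀)
    simp only [hS, hq, add_apply, ContinuousLinearMap.flip_apply, map_sub, zero_apply,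
      sub_apply] at hcrit ⊢
    linarith
  obtain ⟨K, hK⟩ := exists_preimage_norm_le_of_finiteDimensional S
  refine Asymptotics.IsBigO.of_bound K (Filter.eventually_top.2 fun z => ?_)
  obtain ⟨d, hd, hd_le⟩ := hK (z - z₀)
  calc ‖q z - q z₀‖ = ‖S (z - z₀) d‖ / 2 := by
        rw [hq_sub, ← hd, hS_symm, hd, norm_div, Real.norm_two]
    _ ≤ ‖S (z - z₀) d‖ := half_le_self (norm_nonneg _)
    _ ≤ ‖S (z - z₀)‖ * ‖d‖ := (S (z - z₀)).le_opNorm d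
    _ ≤ ‖S (z - z₀)‖ * (K * ‖S (z - z₀)‖) := by gcongr
    _ = K * ‖‖fderiv ℝ q z‖ ^ 2‖ := by
        rw [hfderiv_eq, norm_pow, norm_norm]
        ring

end IsQuadratic

lemma isBigO_sub_norm_fderiv_sq_of_fderiv_ne_zero {q : V → ℝ} (hq : ContDiff ℝ 1 q) {z₀ : V}
    (hz₀ : fderiv ℝ q z₀ ≠ 0) :
    (fun z => q z - q z₀) =O[𝓝 z₀] fun z => ‖fderiv ℝ q z‖ ^ 2 := by
  have hq_sub : ContinuousAt (fun z => q z - q z₀) z₀ :=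
    hq.continuous.continuousAt.sub continuousAt_const
  have hq_one : (fun z => q z - q z₀) =O[𝓝 z₀] fun _ => ‖fderiv ℝ q z₀‖ ^ 2 :=
    hq_sub.tendsto.norm.isBoundedUnder_le.isBigO_const (by simpa using hz₀)
  have hfderiv : Tendsto (fun z => ‖fderiv ℝ q z‖ ^ 2) (𝓝 z₀) (𝓝 (‖fderiv ℝ q z₀‖ ^ 2)) :=
    ((hq.continuous_fderiv one_ne_zero).norm.pow 2).tendsto z₀
  exact hq_one.trans
    ((Asymptotics.isEquivalent_const_iff_tendsto (by simpa using hz₀)).2 hfderiv).isBigO_symm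

theorem IsQuadratic.isBigO_sub_norm_fderiv_sq [FiniteDimensional ℝ V] {q : V → ℝ}
    (hq : IsQuadratic q) (z₀ : V) :
    (fun z => q z - q z₀) =O[𝓝 z₀] fun z => ‖fderiv ℝ q z‖ ^ 2 := by
  by_cases hz₀ : fderiv ℝ q z₀ = 0
  · exact (hq.isBigO_sub_norm_fderiv_sq_of_fderiv_eq_zero hz₀).mono le_top
  · exact isBigO_sub_norm_fderiv_sq_of_fderiv_ne_zero hq.contDiff hz₀

lemma IsQuadratic.comp_const_add {q : V → ℝ} (hq : IsQuadratic q) (z₀ : V) :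
    IsQuadratic fun d => q (z₀ + d) := by
  obtain ⟨B, r, c, hq⟩ := hq
  refine ⟨B, B z₀ + B.flip z₀ + r, B z₀ z₀ + r z₀ + c, fun d => ?_⟩
  simp only [hq, map_add, add_apply, ContinuousLinearMap.flip_apply]
  ring

theorem IsQuadratic.isBigO_sub_norm_fderiv_comp_subtypeL_sq {q : V → ℝ} (hq : IsQuadratic q)
    (W : Submodule ℝ V) [FiniteDimensional ℝ W] (z₀ : V) :
    (fun z => q z - q z₀) =O[𝓝[{z | z - z₀ ∈ W}] z₀]
      fun z => ‖(fderiv ℝ q z).comp W.subtypeL‖ ^ 2 := by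
  have hqW := (hq.comp_const_add z₀).comp W.subtypeL
  have hfderiv (d : W) : fderiv ℝ (fun d : W => q (z₀ + W.subtypeL d)) d
      = (fderiv ℝ q (z₀ + d)).comp W.subtypeL :=
    ((hq.contDiff.differentiable one_ne_zero _).hasFDerivAt.comp d
      (W.subtypeL.hasFDerivAt.const_add z₀)).fderiv
  obtain ⟨C, hC⟩ := (hqW.isBigO_sub_norm_fderiv_sq 0).bound
  simp only [hfderiv] at hC
  rw [nhds_subtype_eq_comap, eventually_comap] at hC
  refine Asymptotics.IsBigO.of_bound C (eventually_nhdsWithin_iff.2 ?_)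
  have hsub : Tendsto (fun z => z - z₀) (𝓝 z₀) (𝓝 ((0 : W) : V)) := by
    simpa using (continuous_sub_right z₀).tendsto z₀
  filter_upwards [hsub.eventually hC] with z hz hzW
  simpa using hz ⟨z - z₀, hzW⟩ rfl

end Quadratic

section Polyhedral

variable {V V' : Type*} [NormedAddCommGroup V] [NormedSpace ℝ V]
  [NormedAddCommGroup V'] [NormedSpace ℝ V']

/-- The members of a family of affine functions that attain the maximum of the family at `z`. -/
def activeSet (S : Set (V →ᴬ[ℝ] ℝ)) (z : V) : Set (V →ᴬ[ℝ] ℝ) :=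
  {ℓ ∈ S | ∀ ℓ' ∈ S, ℓ' z ≤ ℓ z}

/-- The members of a family of constraints `m z ≤ 0` that hold with equality at `z`. -/
def bindingSet (T : Set (V →ᴬ[ℝ] ℝ)) (z : V) : Set (V →ᴬ[ℝ] ℝ) :=
  {m ∈ T | m z = 0}

/-- `g` is the maximum of the affine functions in `S` where all constraints `m z ≤ 0`, `m ∈ T`,
hold, and `⊤` elsewhere. -/
structure IsPolyhedralRep (S T : Set (V →ᴬ[ℝ] ℝ)) (g : V → EReal) : Prop where
  finite_pieces : S.Finite
  finite_constraints : T.Finite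
  exists_eq : ∀ z, (∀ m ∈ T, m z ≤ 0) → ∃ ℓ ∈ activeSet S z, g z = (ℓ z : ℝ)
  eq_top : ∀ z, (∃ m ∈ T, 0 < m z) → g z = ⊤

/-- Polyhedral convex functions. The constant `⊤` is included. -/
def IsPolyhedral (g : V → EReal) : Prop :=
  ∃ S T, IsPolyhedralRep S T g

lemma sub_eq_contLinear_sub (ℓ : V →ᴬ[ℝ] ℝ) (z z' : V) :
    ℓ z - ℓ z' = ℓ.contLinear (z - z') := by
  simpa using (ℓ.contLinear_map_vsub z z').symm

lemma apply_add_smul_eq (ℓ : V →ᴬ[ℝ] ℝ) (z e : V) (t : ℝ) :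
    ℓ (z + t • e) = ℓ z + t * ℓ.contLinear e := by
  simpa [add_comm] using (ℓ.map_vadd z (t • e))

lemma eventually_activeSet_subset {S : Set (V →ᴬ[ℝ] ℝ)} (hS : S.Finite) (z₀ : V) :
    ∀ᶠ z in 𝓝 z₀, activeSet S z ⊆ activeSet S z₀ := by
  have hlt : ∀ᶠ z in 𝓝 z₀, ∀ ℓ ∈ S, ∀ ℓ' ∈ S, ℓ z₀ < ℓ' z₀ → ℓ z < ℓ' z := by
    simp only [eventually_all_finite hS, eventually_imp_distrib_left]
    exact fun ℓ _ ℓ' _ h => ℓ.continuous.continuousAt.eventually_lt ℓ'.continuous.continuousAt h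
  filter_upwards [hlt] with z hz ℓ hℓ
  exact ⟨hℓ.1, fun ℓ' hℓ' => not_lt.1 fun h => (hz ℓ hℓ.1 ℓ' hℓ' h).not_ge (hℓ.2 ℓ' hℓ')⟩

lemma eventually_neg_of_notMem_bindingSet {T : Set (V →ᴬ[ℝ] ℝ)} (hT : T.Finite) {z₀ : V}
    (hz₀ : ∀ m ∈ T, m z₀ ≤ 0) :
    ∀ᶠ z in 𝓝 z₀, ∀ m ∈ T, m ∉ bindingSet T z₀ → m z < 0 := by
  simp only [eventually_all_finite hT, eventually_imp_distrib_left]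
  exact fun m hm hmz₀ => m.continuous.continuousAt.eventually_lt continuousAt_const
    ((hz₀ m hm).lt_of_ne fun h => hmz₀ ⟨hm, h⟩)

/-- The directions along which all functions in `A` have the same slope and all functions in `B`
are constant. -/
def flatDirections (A B : Set (V →ᴬ[ℝ] ℝ)) : Submodule ℝ V where
  carrier := {e | (∀ ℓ ∈ A, ∀ ℓ' ∈ A, ℓ.contLinear e = ℓ'.contLinear e) ∧
    ∀ m ∈ B, m.contLinear e = 0}
  zero_mem' := by simp
  add_mem' := by
    rintro e e' ⟨hA, hB⟩ ⟨hA', hB'⟩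
    refine ⟨fun ℓ hℓ ℓ' hℓ' => ?_, fun m hm => ?_⟩
    · rw [map_add, map_add, hA ℓ hℓ ℓ' hℓ', hA' ℓ hℓ ℓ' hℓ']
    · rw [map_add, hB m hm, hB' m hm, add_zero]
  smul_mem' := by
    rintro t e ⟨hA, hB⟩
    refine ⟨fun ℓ hℓ ℓ' hℓ' => ?_, fun m hm => ?_⟩
    · rw [map_smul, map_smul, hA ℓ hℓ ℓ' hℓ']
    · rw [map_smul, hB m hm, smul_zero]

/-- Near `z`, the function `g` varies along the directions of `W` with slope `ℓ`, starting from
any point of its domain. -/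
def HasSlopeAlong (g : V → EReal) (ℓ : V →L[ℝ] ℝ) (W : Submodule ℝ V) (z : V) : Prop :=
  ∀ᶠ z' in 𝓝 z, g z' ≠ ⊤ → ∀ e ∈ W, ∀ᶠ t in 𝓝 (0 : ℝ),
    g (z' + t • e) = g z' + ((t * ℓ e : ℝ) : EReal)

namespace IsPolyhedralRep

variable {S T : Set (V →ᴬ[ℝ] ℝ)} {g : V → EReal}

lemma nonpos_of_ne_top (hg : IsPolyhedralRep S T g) {z : V} (hz : g z ≠ ⊤) : ∀ m ∈ T, m z ≤ 0 :=
  fun m hm => not_lt.1 fun h => hz (hg.eq_top z ⟨m, hm, h⟩)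

lemma eq_of_mem_activeSet (hg : IsPolyhedralRep S T g) {z : V} (hz : g z ≠ ⊤) {ℓ : V →ᴬ[ℝ] ℝ}
    (hℓ : ℓ ∈ activeSet S z) : g z = (ℓ z : ℝ) := by
  obtain ⟨ℓ', hℓ', h⟩ := hg.exists_eq z (hg.nonpos_of_ne_top hz)
  rw [h, le_antisymm (hℓ.2 ℓ' hℓ'.1) (hℓ'.2 ℓ hℓ.1)]

lemma hasSlopeAlong (hg : IsPolyhedralRep S T g) {z : V} (hz : g z ≠ ⊤) {ℓ : V →ᴬ[ℝ] ℝ}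
    (hℓ : ℓ ∈ activeSet S z) :
    HasSlopeAlong g ℓ.contLinear (flatDirections (activeSet S z) (bindingSet T z)) z := by
  have hnear := (eventually_activeSet_subset hg.finite_pieces z).and
    (eventually_neg_of_notMem_bindingSet hg.finite_constraints (hg.nonpos_of_ne_top hz))
  filter_upwards [hnear.eventually_nhds, hnear] with z' hz'_near ⟨hactive', _⟩ hz' e ⟨heA, heB⟩
  have hline : Tendsto (fun t : ℝ => z' + t • e) (𝓝 0) (𝓝 z') := by
    have : Continuous fun t : ℝ => z' + t • e := by fun_prop
    simpa using this.tendsto 0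
  filter_upwards [hline.eventually hz'_near] with t ⟨hactive_t, hneg_t⟩
  have hfeasible : ∀ m ∈ T, m (z' + t • e) ≤ 0 := by
    intro m hm
    by_cases hmz : m ∈ bindingSet T z
    · rw [apply_add_smul_eq, heB m hmz, mul_zero, add_zero]
      exact hg.nonpos_of_ne_top hz' m hm
    · exact (hneg_t m hm hmz).le
  obtain ⟨ℓ', hℓ', hgz'⟩ := hg.exists_eq z' (hg.nonpos_of_ne_top hz')
  obtain ⟨ℓ'', hℓ'', hgz''⟩ := hg.exists_eq (z' + t • e) hfeasible
  have hmax'' := hℓ''.2 ℓ' hℓ'.1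
  have hmax' := hℓ'.2 ℓ'' hℓ''.1
  rw [apply_add_smul_eq, apply_add_smul_eq, heA ℓ' (hactive' hℓ') ℓ hℓ,
    heA ℓ'' (hactive_t hℓ'') ℓ hℓ] at hmax''
  rw [hgz', hgz'', ← EReal.coe_add, EReal.coe_eq_coe_iff, apply_add_smul_eq,
    heA ℓ'' (hactive_t hℓ'') ℓ hℓ]
  linarith

lemma eventually_sub_mem_flatDirections (hg : IsPolyhedralRep S T g) {z₀ : V} (hz₀ : g z₀ ≠ ⊤) :
    ∀ᶠ z in 𝓝 z₀, z - z₀ ∈ flatDirections (activeSet S z) (bindingSet T z) := by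
  filter_upwards [eventually_activeSet_subset hg.finite_pieces z₀,
    eventually_neg_of_notMem_bindingSet hg.finite_constraints (hg.nonpos_of_ne_top hz₀)]
    with z hactive hneg
  refine ⟨fun ℓ hℓ ℓ' hℓ' => ?_, fun m hm => ?_⟩
  · have hz_eq : ℓ z = ℓ' z := le_antisymm (hℓ'.2 ℓ hℓ.1) (hℓ.2 ℓ' hℓ'.1)
    have hz₀_eq : ℓ z₀ = ℓ' z₀ :=
      le_antisymm ((hactive hℓ').2 ℓ hℓ.1) ((hactive hℓ).2 ℓ' hℓ'.1)
    rw [← sub_eq_contLinear_sub, ← sub_eq_contLinear_sub, hz_eq, hz₀_eq]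
  · have hmz₀ : m ∈ bindingSet T z₀ := by
      by_contra h
      exact (hneg m hm.1 h).ne hm.2
    rw [← sub_eq_contLinear_sub, hm.2, hmz₀.2, sub_zero]

end IsPolyhedralRep

namespace IsPolyhedral

variable {g g₁ g₂ : V → EReal}

theorem exists_finite_slopes (hg : IsPolyhedral g) :
    ∃ P : Set ((V →L[ℝ] ℝ) × Submodule ℝ V), P.Finite ∧ ∀ z₀, g z₀ ≠ ⊤ → ∀ᶠ z in 𝓝 z₀,
      g z ≠ ⊤ → ∃ p ∈ P, HasSlopeAlong g p.1 p.2 z ∧ z - z₀ ∈ p.2 ∧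
        g z = g z₀ + ((p.1 (z - z₀) : ℝ) : EReal) := by
  obtain ⟨S, T, hST⟩ := hg
  refine ⟨((·.contLinear) '' S) ×ˢ Set.image2 flatDirections (𝒫 S) (𝒫 T),
    (hST.finite_pieces.image _).prod
      (hST.finite_pieces.finite_subsets.image2 _ hST.finite_constraints.finite_subsets),
    fun z₀ hz₀ => ?_⟩
  filter_upwards [hST.eventually_sub_mem_flatDirections hz₀,
    eventually_activeSet_subset hST.finite_pieces z₀] with z hmem hactive hz
  obtain ⟨ℓ, hℓ, hgz⟩ := hST.exists_eq z (hST.nonpos_of_ne_top hz)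
  refine ⟨(ℓ.contLinear, flatDirections (activeSet S z) (bindingSet T z)),
    ⟨⟨ℓ, hℓ.1, rfl⟩, ⟨_, sep_subset _ _, _, sep_subset _ _, rfl⟩⟩,
    hST.hasSlopeAlong hz hℓ, hmem, ?_⟩
  rw [hgz, hST.eq_of_mem_activeSet hz₀ (hactive hℓ), ← EReal.coe_add, EReal.coe_eq_coe_iff,
    ← sub_eq_contLinear_sub]
  ring

lemma ne_bot (hg : IsPolyhedral g) (z : V) : g z ≠ ⊥ := by
  obtain ⟨S, T, hST⟩ := hg
  by_cases hz : g z = ⊤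
  · simp [hz]
  · obtain ⟨ℓ, -, h⟩ := hST.exists_eq z (hST.nonpos_of_ne_top hz)
    simp [h]

lemma zero : IsPolyhedral fun _ : V => (0 : EReal) :=
  ⟨{0}, ∅, finite_singleton 0, finite_empty, by simp [activeSet], by simp⟩

lemma add (h₁ : IsPolyhedral g₁) (h₂ : IsPolyhedral g₂) :
    IsPolyhedral fun z => g₁ z + g₂ z := by
  obtain ⟨S₁, T₁, h₁⟩ := id h₁
  obtain ⟨S₂, T₂, h₂⟩ := id h₂
  refine ⟨Set.image2 (· + ·) S₁ S₂, T₁ ∪ T₂, h₁.finite_pieces.image2 _ h₂.finite_pieces,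
    h₁.finite_constraints.union h₂.finite_constraints, fun z hz => ?_, ?_⟩
  · obtain ⟨ℓ₁, hℓ₁, h₁z⟩ := h₁.exists_eq z fun m hm => hz m (.inl hm)
    obtain ⟨ℓ₂, hℓ₂, h₂z⟩ := h₂.exists_eq z fun m hm => hz m (.inr hm)
    refine ⟨ℓ₁ + ℓ₂, ⟨mem_image2_of_mem hℓ₁.1 hℓ₂.1, ?_⟩, by simp [h₁z, h₂z]⟩
    rintro _ ⟨ℓ₁', hℓ₁', ℓ₂', hℓ₂', rfl⟩
    exact add_le_add (hℓ₁.2 ℓ₁' hℓ₁') (hℓ₂.2 ℓ₂' hℓ₂')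
  · rintro z ⟨m, hm | hm, hmz⟩
    · rw [h₁.eq_top z ⟨m, hm, hmz⟩, EReal.top_add_of_ne_bot (ne_bot ⟨S₂, T₂, h₂⟩ z)]
    · rw [h₂.eq_top z ⟨m, hm, hmz⟩, EReal.add_top_of_ne_bot (ne_bot ⟨S₁, T₁, h₁⟩ z)]

lemma sum {ι : Type*} (s : Finset ι) {g : ι → V → EReal} (hg : ∀ i, IsPolyhedral (g i)) :
    IsPolyhedral fun z => ∑ i ∈ s, g i z := by
  induction s using Finset.cons_induction with
  | empty => exact zero
  | cons i s hi ih =>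
    simp only [Finset.sum_cons]
    exact (hg i).add ih

lemma comp {g : V' → EReal} (hg : IsPolyhedral g) (A : V →L[ℝ] V') :
    IsPolyhedral fun z => g (A z) := by
  obtain ⟨S, T, hST⟩ := hg
  let pullback (ℓ : V' →ᴬ[ℝ] ℝ) : V →ᴬ[ℝ] ℝ := ℓ.comp A.toContinuousAffineMap
  refine ⟨pullback '' S, pullback '' T, hST.finite_pieces.image _, hST.finite_constraints.image _,
    fun z hz => ?_, ?_⟩
  · obtain ⟨ℓ, hℓ, h⟩ := hST.exists_eq (A z) fun m hm => hz _ ⟨m, hm, rfl⟩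
    refine ⟨pullback ℓ, ⟨⟨ℓ, hℓ.1, rfl⟩, ?_⟩, h⟩
    rintro _ ⟨ℓ', hℓ', rfl⟩
    exact hℓ.2 ℓ' hℓ'
  · rintro z ⟨_, ⟨m, hm, rfl⟩, hmz⟩
    exact hST.eq_top (A z) ⟨m, hm, hmz⟩

end IsPolyhedral

lemma isPolyhedral_mul_abs {μ : ℝ} (hμ : 0 ≤ μ) :
    IsPolyhedral fun s : ℝ => ((μ * |s| : ℝ) : EReal) := by
  let ℓ : ℝ →ᴬ[ℝ] ℝ := μ • ContinuousAffineMap.id ℝ ℝ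
  refine ⟨{ℓ, -ℓ}, ∅, toFinite _, finite_empty, fun s _ => ?_, by simp⟩
  rcases abs_cases s with ⟨hs, hs_sign⟩ | ⟨hs, hs_sign⟩
  · refine ⟨ℓ, ⟨by simp, ?_⟩, by simp [ℓ, hs]⟩
    simp only [mem_insert_iff, mem_singleton_iff, forall_eq_or_imp, forall_eq]
    exact ⟨le_rfl, neg_le_self (mul_nonneg hμ hs_sign)⟩
  · refine ⟨-ℓ, ⟨by simp, ?_⟩, by simp [ℓ, hs]⟩
    simp only [mem_insert_iff, mem_singleton_iff, forall_eq_or_imp, forall_eq]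
    exact ⟨(mul_nonpos_of_nonneg_of_nonpos hμ hs_sign.le).trans
      (neg_nonneg.2 (mul_nonpos_of_nonneg_of_nonpos hμ hs_sign.le)), le_rfl⟩

/-- The convex indicator function of the interval `[-lam, lam]`. -/
def intervalIndicator (lam s : ℝ) : EReal :=
  if |s| ≤ lam then 0 else ⊤

lemma isPolyhedral_intervalIndicator (lam : ℝ) : IsPolyhedral (intervalIndicator lam) := by
  let upper : ℝ →ᴬ[ℝ] ℝ := ContinuousAffineMap.id ℝ ℝ - ContinuousAffineMap.const ℝ ℝ lam
  let lower : ℝ →ᴬ[ℝ] ℝ := -ContinuousAffineMap.id ℝ ℝ - ContinuousAffineMap.const ℝ ℝ lam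
  have hfeasible (s : ℝ) : (∀ m ∈ ({upper, lower} : Set (ℝ →ᴬ[ℝ] ℝ)), m s ≤ 0) ↔ |s| ≤ lam := by
    simp [upper, lower, abs_le']
  refine ⟨{0}, {upper, lower}, finite_singleton 0, toFinite _, fun s hs => ?_, fun s hs => ?_⟩
  · exact ⟨0, by simp [activeSet], by simp [intervalIndicator, (hfeasible s).1 hs]⟩
  · refine if_neg fun h => ?_
    obtain ⟨m, hm, hms⟩ := hs
    exact hms.not_ge ((hfeasible s).2 h m hm)

end Polyhedral

section Subgradient

variable {h g : H → EReal} {q : H → ℝ} {v x z e : H}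

lemma FrechetSubgradAt.eventually_nhds (hv : FrechetSubgradAt h v x) {ε : ℝ} (hε : 0 < ε) :
    ∀ᶠ y in 𝓝 x, h x + ((⟪v, y - x⟫ - ε * ‖y - x‖ : ℝ) : EReal) ≤ h y := by
  rw [← nhdsNE_sup_pure, eventually_sup, eventually_pure]
  exact ⟨hv ε hε, by simp⟩

lemma FrechetSubgradAt.inner_le_of_hasDerivWithinAt (hv : FrechetSubgradAt h v x) {φ : ℝ → ℝ}
    {c : ℝ} (hφ : HasDerivWithinAt φ c (Ioi 0) 0) (hx : h x = φ 0)
    (hline : ∀ᶠ t in 𝓝[>] (0 : ℝ), h (x + t • e) = φ t) : ⟪v, e⟫ ≤ c := by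
  have hε : ∀ ε > 0, ⟪v, e⟫ - ε * ‖e‖ ≤ c := by
    intro ε hε
    have htendsto : Tendsto (fun t : ℝ => x + t • e) (𝓝[>] 0) (𝓝 x) := by
      have hcont : Continuous fun t : ℝ => x + t • e := by fun_prop
      simpa using (hcont.tendsto 0).mono_left nhdsWithin_le_nhds
    refine ge_of_tendsto ((hasDerivWithinAt_iff_tendsto_slope' self_notMem_Ioi).1 hφ) ?_
    filter_upwards [htendsto.eventually (hv.eventually_nhds hε), hline, self_mem_nhdsWithin]
      with t hvt ht ht_pos
    have ht_pos : 0 < t := ht_pos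
    rw [ht, hx, add_sub_cancel_left, ← EReal.coe_add, EReal.coe_le_coe_iff, inner_smul_right,
      norm_smul, Real.norm_of_nonneg ht_pos.le] at hvt
    rw [slope_def_field, sub_zero, le_div_iff₀ ht_pos]
    linarith
  have hlim : Tendsto (fun ε : ℝ => ⟪v, e⟫ - ε * ‖e‖) (𝓝[>] 0) (𝓝 ⟪v, e⟫) := by
    have hcont : Continuous fun ε : ℝ => ⟪v, e⟫ - ε * ‖e‖ := by fun_prop
    simpa using (hcont.tendsto 0).mono_left nhdsWithin_le_nhds
  exact le_of_tendsto hlim (eventually_nhdsWithin_of_forall hε)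

lemma FrechetSubgradAt.inner_eq_of_hasDerivAt (hv : FrechetSubgradAt h v x) {φ : ℝ → ℝ} {c : ℝ}
    (hφ : HasDerivAt φ c 0) (hline : ∀ᶠ t in 𝓝 (0 : ℝ), h (x + t • e) = φ t) : ⟪v, e⟫ = c := by
  have hx : h x = φ 0 := by simpa using hline.self_of_nhds
  have hle : ⟪v, e⟫ ≤ c :=
    hv.inner_le_of_hasDerivWithinAt hφ.hasDerivWithinAt hx (hline.filter_mono nhdsWithin_le_nhds)
  have hneg : Tendsto (fun t : ℝ => -t) (𝓝 0) (𝓝 0) := by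
    simpa using (continuous_neg (G := ℝ)).tendsto 0
  have hφ_neg : HasDerivAt (fun t => φ (-t)) (-c) 0 := by
    rw [← neg_zero] at hφ
    exact (hφ.comp 0 (hasDerivAt_neg 0)).congr_deriv (mul_neg_one c)
  have hge : ⟪v, -e⟫ ≤ -c := by
    refine hv.inner_le_of_hasDerivWithinAt hφ_neg.hasDerivWithinAt (by simpa using hx) ?_
    filter_upwards [(hneg.eventually hline).filter_mono nhdsWithin_le_nhds] with t ht
    rwa [smul_neg, ← neg_smul]
  rw [inner_neg_right] at hge
  linarith

lemma FrechetSubgradAt.inner_eq_fderiv_add_of_slope (hq : DifferentiableAt ℝ q z)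
    {a : ℝ} (hz : g z ≠ ⊤) (hz' : g z ≠ ⊥)
    (hline : ∀ᶠ t in 𝓝 (0 : ℝ), g (z + t • e) = g z + ((t * a : ℝ) : EReal))
    (hv : FrechetSubgradAt (fun z => (q z : EReal) + g z) v z) :
    ⟪v, e⟫ = fderiv ℝ q z e + a := by
  have hqline : HasDerivAt (fun t : ℝ => q (z + t • e)) (fderiv ℝ q z e) 0 :=
    hq.hasFDerivAt.hasLineDerivAt e
  have hgline : HasDerivAt (fun t : ℝ => (g z).toReal + t * a) a 0 := by
    simpa only [id, one_mul] using ((hasDerivAt_id (0 : ℝ)).mul_const a).const_add (g z).toReal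
  have hφ : HasDerivAt (fun t : ℝ => q (z + t • e) + ((g z).toReal + t * a))
      (fderiv ℝ q z e + a) 0 :=
    hqline.add hgline
  refine hv.inner_eq_of_hasDerivAt hφ (hline.mono fun t ht => ?_)
  rw [ht, EReal.coe_add, EReal.coe_add, EReal.coe_toReal hz hz']

theorem inner_eq_of_mem_limSubdiff (hq : ContDiff ℝ 1 q) (hg : ∀ z, g z ≠ ⊥)
    {ℓ : H →L[ℝ] ℝ} {W : Submodule ℝ H} (hslope : HasSlopeAlong g ℓ W z) (hz : g z ≠ ⊤)
    (hv : v ∈ limSubdiff (fun z => (q z : EReal) + g z) z) (he : e ∈ W) :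
    ⟪v, e⟫ = fderiv ℝ q z e + ℓ e := by
  obtain ⟨xs, vs, hxs, hhxs, hvs, hsub⟩ := hv
  have hdom : ∀ᶠ k in atTop, (q (xs k) : EReal) + g (xs k) < ⊤ :=
    hhxs.eventually (gt_mem_nhds (EReal.add_lt_top (EReal.coe_ne_top _) hz))
  have hinner : ∀ᶠ k in atTop, ⟪vs k, e⟫ = fderiv ℝ q (xs k) e + ℓ e := by
    filter_upwards [hdom, hxs.eventually hslope] with k hk hslope_k
    have hk : g (xs k) ≠ ⊤ := fun h => by simp [h] at hk
    exact (hsub k).inner_eq_fderiv_add_of_slope (hq.differentiable one_ne_zero _) hk (hg _)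
      (hslope_k hk e he)
  have hfderiv : Tendsto (fun k => fderiv ℝ q (xs k) e + ℓ e) atTop (𝓝 (fderiv ℝ q z e + ℓ e)) :=
    ((((hq.continuous_fderiv one_ne_zero).clm_apply continuous_const).tendsto z).comp
      hxs).add_const _
  exact tendsto_nhds_unique (hvs.inner tendsto_const_nhds)
    (hfderiv.congr' (hinner.mono fun _ => Eq.symm))

end Subgradient

section KurdykaLojasiewicz

lemma klExpAt_half_of_toReal_sub_le {h : H → EReal} {z₀ : H} {C : ℝ} (hC : 0 < C)
    (hle : ∀ᶠ z in 𝓝 z₀, h z ≠ ⊤ → ∀ v ∈ limSubdiff h z,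
      (h z).toReal - (h z₀).toReal ≤ C * ‖v‖ ^ 2) :
    KLExpAt h (1 / 2) z₀ := by
  obtain ⟨ε, hε, hball⟩ := Metric.nhds_basis_closedBall.eventually_iff.1 hle
  refine ⟨2 * √C, by positivity, ε, hε, 1, one_pos, fun z hz hgt hlt hne => ?_⟩
  have hz_top : h z ≠ ⊤ := hlt.ne_top
  have hz₀_bot : h z₀ ≠ ⊥ := fun h => by simp [h] at hlt
  have hδ : 0 < (h z).toReal - (h z₀).toReal := by
    rwa [sub_pos, ← EReal.coe_lt_coe_iff, EReal.coe_toReal hgt.ne_top hz₀_bot,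
      EReal.coe_toReal hz_top hgt.ne_bot]
  set δ := (h z).toReal - (h z₀).toReal
  have hdist : √(δ / C) ≤ infDist 0 (limSubdiff h z) := by
    refine (le_infDist hne).2 fun v hv => ?_
    rw [dist_zero_left, Real.sqrt_le_left (norm_nonneg v), div_le_iff₀' hC]
    exact hball (mem_closedBall_iff_norm.2 hz) hz_top v hv
  calc (1 : ℝ) = 2 * √C * (1 - 1 / 2) * δ ^ (-(1 / 2) : ℝ) * √(δ / C) := by
        rw [Real.rpow_neg hδ.le, ← Real.sqrt_eq_rpow, Real.sqrt_div hδ.le]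
        have := Real.sqrt_pos.2 hδ
        have := Real.sqrt_pos.2 hC
        field_simp
        norm_num
    _ ≤ 2 * √C * (1 - 1 / 2) * δ ^ (-(1 / 2) : ℝ) * infDist 0 (limSubdiff h z) := by
        gcongr

lemma norm_fderiv_comp_subtypeL_le_of_mem_limSubdiff {q : H → ℝ} {g : H → EReal} {z v : H}
    (hq : ContDiff ℝ 1 q) (hg : ∀ z, g z ≠ ⊥) {ℓ : H →L[ℝ] ℝ} {W : Submodule ℝ H}
    (hslope : HasSlopeAlong g ℓ W z) (hz : g z ≠ ⊤)
    (hv : v ∈ limSubdiff (fun z => (q z : EReal) + g z) z) :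
    ‖(fderiv ℝ (fun z => q z + ℓ z) z).comp W.subtypeL‖ ≤ ‖v‖ := by
  refine ContinuousLinearMap.opNorm_le_bound _ (norm_nonneg v) fun e => ?_
  have hfderiv : fderiv ℝ (fun z => q z + ℓ z) z = fderiv ℝ q z + ℓ :=
    ((hq.differentiable one_ne_zero z).hasFDerivAt.add ℓ.hasFDerivAt).fderiv
  calc ‖(fderiv ℝ (fun z => q z + ℓ z) z).comp W.subtypeL e‖ = ‖⟪v, (e : H)⟫‖ := by
        rw [inner_eq_of_mem_limSubdiff hq hg hslope hz hv e.2, hfderiv]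
        rfl
    _ ≤ ‖v‖ * ‖e‖ := norm_inner_le_norm v (e : H)

theorem IsQuadratic.isKLWithExp_half_add_isPolyhedral [FiniteDimensional ℝ H] {q : H → ℝ}
    {g : H → EReal} (hq : IsQuadratic q) (hg : IsPolyhedral g) :
    IsKLWithExp (fun z => (q z : EReal) + g z) (1 / 2) := by
  intro z₀ _
  by_cases hz₀ : g z₀ = ⊤
  · exact ⟨1, one_pos, 1, one_pos, 1, one_pos, fun z _ hgt => absurd hgt (by simp [hz₀])⟩
  obtain ⟨P, hP, hpieces⟩ := hg.exists_finite_slopes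
  have hbound : ∀ᶠ C : ℝ in atTop, ∀ p ∈ P, ∀ᶠ z in 𝓝 z₀, z - z₀ ∈ p.2 →
      ‖q z + p.1 z - (q z₀ + p.1 z₀)‖
        ≤ C * ‖‖(fderiv ℝ (fun z => q z + p.1 z) z).comp p.2.subtypeL‖ ^ 2‖ := by
    refine (eventually_all_finite hP).2 fun p _ => ?_
    have hqp : IsQuadratic fun z => q z + p.1 z := hq.add (.of_linear p.1)
    have := Asymptotics.isBigO_iff_eventually.1 (hqp.isBigO_sub_norm_fderiv_comp_subtypeL_sq p.2 z₀)
    simpa only [eventually_nhdsWithin_iff, mem_ofPred_eq] using this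
  obtain ⟨C, hC, hC_pos⟩ := (hbound.and (eventually_gt_atTop 0)).exists
  refine klExpAt_half_of_toReal_sub_le hC_pos ?_
  filter_upwards [(eventually_all_finite hP).2 hC, hpieces z₀ hz₀] with z hz hz_piece hz_top v hv
  have hgz : g z ≠ ⊤ := fun h => by simp [h] at hz_top
  obtain ⟨p, hp, hslope, hmem, hg_eq⟩ := hz_piece hgz
  calc ((q z : EReal) + g z).toReal - ((q z₀ : EReal) + g z₀).toReal
      = q z + p.1 z - (q z₀ + p.1 z₀) := by
        rw [hg_eq]
        lift g z₀ to ℝ using ⟨hz₀, hg.ne_bot z₀⟩ with a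
        simp only [← EReal.coe_add, EReal.toReal_coe, map_sub]
        ring
    _ ≤ C * ‖‖(fderiv ℝ (fun z => q z + p.1 z) z).comp p.2.subtypeL‖ ^ 2‖ :=
        (Real.le_norm_self _).trans (hz p hp hmem)
    _ ≤ C * ‖v‖ ^ 2 := by
        rw [Real.norm_of_nonneg (sq_nonneg _)]
        gcongr
        exact norm_fderiv_comp_subtypeL_le_of_mem_limSubdiff hq.contDiff hg.ne_bot hslope hgz hv

end KurdykaLojasiewicz

section Conjugate

lemma coe_sum_eq_sum_coe {ι : Type*} (s : Finset ι) (a : ι → ℝ) :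
    ((∑ i ∈ s, a i : ℝ) : EReal) = ∑ i ∈ s, (a i : EReal) :=
  map_sum (⟨⟨Real.toEReal, EReal.coe_zero⟩, EReal.coe_add⟩ : ℝ →+ EReal) a s

lemma iSup_sum_eq_sum_iSup {ι α : Type*} [Nonempty α] (s : Finset ι) (a : ι → α → ℝ) :
    ⨆ x : ι → α, ((∑ i ∈ s, a i (x i) : ℝ) : EReal) = ∑ i ∈ s, ⨆ u, (a i u : EReal) := by
  refine le_antisymm (iSup_le fun x => ?_) ?_
  · rw [coe_sum_eq_sum_coe]
    exact Finset.sum_le_sum fun i _ => le_iSup (fun u => (a i u : EReal)) (x i)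
  · classical
    induction s using Finset.cons_induction with
    | empty => simp
    | cons i s hi ih =>
      rw [Finset.sum_cons]
      refine EReal.add_le_of_forall_lt fun b hb c hc => ?_
      obtain ⟨u, hu⟩ := lt_iSup_iff.1 hb
      obtain ⟨x, hx⟩ := lt_iSup_iff.1 (hc.trans_le ih)
      have hsum : ∑ j ∈ s, a j (Function.update x i u j) = ∑ j ∈ s, a j (x j) :=
        Finset.sum_congr rfl fun j hj => by
          rw [Function.update_of_ne (ne_of_mem_of_not_mem hj hi)]
      refine (add_le_add hu.le hx.le).trans (le_iSup_of_le (Function.update x i u) ?_)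
      rw [Finset.sum_cons, Function.update_self, hsum, EReal.coe_add]

lemma conjE_of_forall_eq_sum {n : ℕ} {P : Eucl n → ℝ} {p : ℝ → ℝ} (hP : ∀ x, P x = ∑ i, p (x i))
    (y : Eucl n) : conjE P y = ∑ i, conjE p (y i) := by
  simp only [conjE]
  rw [← iSup_sum_eq_sum_iSup, ← (WithLp.equiv 2 (Fin n → ℝ)).iSup_comp]
  refine iSup_congr fun x => ?_
  rw [hP, PiLp.inner_apply, ← Finset.sum_sub_distrib]
  rfl

lemma integral_add_mul_sub_le_integral {r : ℝ → ℝ} (hr : Continuous r) (hr_mono : Monotone r)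
    (a b : ℝ) : (∫ t in (0 : ℝ)..b, r t) + r b * (a - b) ≤ ∫ t in (0 : ℝ)..a, r t := by
  have hderiv (s : ℝ) : HasDerivAt (fun s => ∫ t in (0 : ℝ)..s, r t) (r s) s :=
    hr.integral_hasStrictDerivAt 0 s |>.hasDerivAt
  have hderiv_eq : deriv (fun s => ∫ t in (0 : ℝ)..s, r t) = r := funext fun s => (hderiv s).deriv
  have hconv : ConvexOn ℝ univ fun s => ∫ t in (0 : ℝ)..s, r t :=
    Monotone.convexOn_univ_of_deriv (fun s => (hderiv s).differentiableAt) (by rwa [hderiv_eq])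
  rcases lt_trichotomy a b with h | rfl | h
  · have := hconv.slope_le_of_hasDerivAt (mem_univ a) (mem_univ b) h (hderiv b)
    rw [slope_def_field, div_le_iff₀ (by linarith)] at this
    linarith
  · simp
  · have := hconv.le_slope_of_hasDerivAt (mem_univ b) (mem_univ a) h (hderiv b)
    rw [slope_def_field, le_div_iff₀ (by linarith)] at this
    linarith

/-- The derivative on the half-line of the one-dimensional components of `P₂`: it vanishes up to
`μ`, then grows with slope `1 / κ` until it reaches `lam`. -/
def cappedRamp (lam μ κ t : ℝ) : ℝ :=
  max 0 (min lam ((t - μ) / κ))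

/-- The one-dimensional component of `P₂`, for MCP with `μ = 0`, `κ = θ` and for SCAD with
`μ = lam`, `κ = θ - 1`. -/
def rampPenalty (lam μ κ s : ℝ) : ℝ :=
  ∫ t in (0 : ℝ)..|s|, cappedRamp lam μ κ t

variable {lam μ κ : ℝ}

lemma continuous_cappedRamp : Continuous (cappedRamp lam μ κ) := by
  unfold cappedRamp
  fun_prop

lemma monotone_cappedRamp (hκ : 0 < κ) : Monotone (cappedRamp lam μ κ) := by
  intro s t hst
  unfold cappedRamp
  gcongr

lemma cappedRamp_add_mul (hκ : 0 < κ) {a : ℝ} (ha : 0 ≤ a) (ha_le : a ≤ lam) :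
    cappedRamp lam μ κ (μ + κ * a) = a := by
  rw [cappedRamp, add_sub_cancel_left, mul_div_cancel_left₀ a hκ.ne', min_eq_right ha_le,
    max_eq_right ha]

lemma integral_cappedRamp (hμ : 0 ≤ μ) (hκ : 0 < κ) {a : ℝ} (ha : 0 ≤ a) (ha_le : a ≤ lam) :
    ∫ t in (0 : ℝ)..μ + κ * a, cappedRamp lam μ κ t = κ / 2 * a ^ 2 := by
  have hκa : 0 ≤ κ * a := by positivity
  have hflat : ∫ t in (0 : ℝ)..μ, cappedRamp lam μ κ t = ∫ _ in (0 : ℝ)..μ, (0 : ℝ) := by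
    refine intervalIntegral.integral_congr fun t ht => ?_
    rw [uIcc_of_le hμ] at ht
    have ht_nonpos : (t - μ) / κ ≤ 0 :=
      div_nonpos_of_nonpos_of_nonneg (sub_nonpos.2 ht.2) hκ.le
    exact max_eq_left ((min_le_right _ _).trans ht_nonpos)
  have hramp : ∫ t in μ..μ + κ * a, cappedRamp lam μ κ t = ∫ t in μ..μ + κ * a, (t - μ) / κ := by
    refine intervalIntegral.integral_congr fun t ht => ?_
    rw [uIcc_of_le (by linarith)] at ht
    have ht_nonneg : 0 ≤ (t - μ) / κ := div_nonneg (by linarith [ht.1]) hκ.le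
    have ht_le : (t - μ) / κ ≤ lam := ((div_le_iff₀' hκ).2 (by linarith [ht.2])).trans ha_le
    simp only [cappedRamp, min_eq_right ht_le, max_eq_right ht_nonneg]
  rw [← intervalIntegral.integral_add_adjacent_intervals
    (continuous_cappedRamp.intervalIntegrable 0 μ) (continuous_cappedRamp.intervalIntegrable _ _),
    hflat, hramp, intervalIntegral.integral_zero, zero_add, intervalIntegral.integral_div,
    intervalIntegral.integral_comp_sub_right (fun t => t), sub_self, add_sub_cancel_left,
    integral_id]
  field_simp
  ring

lemma rampPenalty_le (hlam : 0 ≤ lam) (s : ℝ) : rampPenalty lam μ κ s ≤ lam * |s| := by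
  calc rampPenalty lam μ κ s ≤ ∫ _ in (0 : ℝ)..|s|, lam :=
        intervalIntegral.integral_mono_on (abs_nonneg s)
          (continuous_cappedRamp.intervalIntegrable _ _) (by simp)
          fun t _ => max_le hlam (min_le_left _ _)
    _ = lam * |s| := by simp [mul_comm]

lemma mul_sub_rampPenalty_le (hμ : 0 ≤ μ) (hκ : 0 < κ) {y : ℝ} (hy : |y| ≤ lam) (s : ℝ) :
    s * y - rampPenalty lam μ κ s ≤ κ / 2 * y ^ 2 + μ * |y| := by
  have htangent := integral_add_mul_sub_le_integral (continuous_cappedRamp (lam := lam) (μ := μ))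
    (monotone_cappedRamp hκ) |s| (μ + κ * |y|)
  rw [integral_cappedRamp hμ hκ (abs_nonneg y) hy, cappedRamp_add_mul hκ (abs_nonneg y) hy,
    sq_abs] at htangent
  have hsy : s * y ≤ |y| * |s| := (le_abs_self _).trans_eq ((abs_mul s y).trans (mul_comm _ _))
  have hy_sq : |y| * |y| = y ^ 2 := by rw [← sq, sq_abs]
  unfold rampPenalty
  linear_combination hsy + htangent + κ * hy_sq

lemma exists_abs_eq_and_mul_eq {t : ℝ} (ht : 0 ≤ t) (y : ℝ) : ∃ s, |s| = t ∧ s * y = t * |y| := by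
  rcases abs_cases y with ⟨hy, -⟩ | ⟨hy, -⟩
  · exact ⟨t, abs_of_nonneg ht, by rw [hy]⟩
  · exact ⟨-t, by rw [abs_neg, abs_of_nonneg ht], by rw [hy]; ring⟩

lemma exists_mul_sub_rampPenalty_eq (hμ : 0 ≤ μ) (hκ : 0 < κ) {y : ℝ} (hy : |y| ≤ lam) :
    ∃ s, s * y - rampPenalty lam μ κ s = κ / 2 * y ^ 2 + μ * |y| := by
  obtain ⟨s, hs, hsy⟩ := exists_abs_eq_and_mul_eq (t := μ + κ * |y|) (by positivity) y
  refine ⟨s, ?_⟩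
  rw [rampPenalty, hsy, hs, integral_cappedRamp hμ hκ (abs_nonneg y) hy, ← sq_abs y]
  ring

lemma exists_lt_mul_sub_rampPenalty (hlam : 0 ≤ lam) {y : ℝ} (hy : lam < |y|) (M : ℝ) :
    ∃ s, M < s * y - rampPenalty lam μ κ s := by
  have hgap : 0 < |y| - lam := sub_pos.2 hy
  obtain ⟨s, hs, hsy⟩ :=
    exists_abs_eq_and_mul_eq (t := (|M| + 1) / (|y| - lam)) (by positivity) y
  refine ⟨s, ?_⟩
  calc M < |M| + 1 := (le_abs_self M).trans_lt (lt_add_one _)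
    _ = s * y - lam * |s| := by
        rw [hs, hsy]
        field_simp
    _ ≤ s * y - rampPenalty lam μ κ s := by
        gcongr
        exact rampPenalty_le hlam s

theorem conjE_rampPenalty (hlam : 0 ≤ lam) (hμ : 0 ≤ μ) (hκ : 0 < κ) (y : ℝ) :
    conjE (rampPenalty lam μ κ) y
      = ((κ / 2 * y ^ 2 : ℝ) : EReal) + (((μ * |y| : ℝ) : EReal) + intervalIndicator lam y) := by
  have hconj : conjE (rampPenalty lam μ κ) y
      = ⨆ s : ℝ, ((s * y - rampPenalty lam μ κ s : ℝ) : EReal) :=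
    iSup_congr fun s => by rw [RCLike.inner_apply', conj_trivial]
  rw [hconj, intervalIndicator]
  split_ifs with hy
  · rw [add_zero, ← EReal.coe_add]
    obtain ⟨s, hs⟩ := exists_mul_sub_rampPenalty_eq hμ hκ hy
    exact le_antisymm
      (iSup_le fun s => EReal.coe_le_coe_iff.2 (mul_sub_rampPenalty_le hμ hκ hy s))
      (le_iSup_of_le s (by rw [hs]))
  · rw [EReal.coe_add_top, EReal.coe_add_top, EReal.eq_top_iff_forall_lt]
    intro M
    obtain ⟨s, hs⟩ := exists_lt_mul_sub_rampPenalty hlam (not_le.1 hy) M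
    exact (EReal.coe_lt_coe_iff.2 hs).trans_le
      (le_iSup (fun s : ℝ => ((s * y - rampPenalty lam μ κ s : ℝ) : EReal)) s)

lemma mul_integral_mcp {θ : ℝ} (hlam : 0 < lam) (hθ : 0 < θ) (s : ℝ) :
    lam * ∫ t in (0 : ℝ)..|s|, min 1 (t / (θ * lam)) = rampPenalty lam 0 θ s := by
  rw [rampPenalty, ← intervalIntegral.integral_const_mul]
  refine intervalIntegral.integral_congr fun t ht => ?_
  rw [uIcc_of_le (abs_nonneg s)] at ht
  have ht_nonneg : 0 ≤ t / θ := div_nonneg ht.1 hθ.le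
  simp only [cappedRamp, sub_zero]
  rw [max_eq_right (le_min hlam.le ht_nonneg), mul_min_of_nonneg _ _ hlam.le]
  congr 1
  · ring
  · field_simp

lemma mul_integral_scad {θ : ℝ} (hlam : 0 < lam) (hθ : 1 < θ) (s : ℝ) :
    lam * ∫ t in (0 : ℝ)..|s|, max (min (θ * lam) t - lam) 0 / ((θ - 1) * lam)
      = rampPenalty lam lam (θ - 1) s := by
  rw [rampPenalty, ← intervalIntegral.integral_const_mul]
  refine intervalIntegral.integral_congr fun t _ => ?_
  have hθ' : 0 < θ - 1 := sub_pos.2 hθ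
  have hcap : lam = (θ * lam - lam) / (θ - 1) := by
    field_simp
  calc lam * (max (min (θ * lam) t - lam) 0 / ((θ - 1) * lam))
      = max (min (θ * lam) t - lam) 0 / (θ - 1) := by field_simp
    _ = max 0 (min ((θ * lam - lam) / (θ - 1)) ((t - lam) / (θ - 1))) := by
        rw [max_comm, ← min_sub_sub_right, min_div_div_right hθ'.le, ← max_div_div_right hθ'.le,
          zero_div]
    _ = cappedRamp lam lam (θ - 1) t := by rw [cappedRamp, ← hcap]

end Conjugate

section PotentialFunction

variable {n : ℕ} {f P₂ : Eucl n → ℝ} {P₁ : Eucl n → EReal}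

theorem isKLWithExp_half_potE3 {q₂ : Eucl n → ℝ} {g₂ : Eucl n → EReal} (L : ℝ)
    (hf : IsQuadratic f) (hP₁ : IsPolyhedral P₁) (hq₂ : IsQuadratic q₂) (hg₂ : IsPolyhedral g₂)
    (hconj : ∀ y, conjE P₂ y = (q₂ y : EReal) + g₂ y) :
    IsKLWithExp (potE3 f P₁ P₂ L) (1 / 2) := by
  let yw : Trip n →L[ℝ] WithLp 2 (Eucl n × Eucl n) := WithLp.sndL 2 ℝ _ _
  let x : Trip n →L[ℝ] Eucl n := WithLp.fstL 2 ℝ _ _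
  let y : Trip n →L[ℝ] Eucl n := (WithLp.fstL 2 ℝ _ _).comp yw
  let w : Trip n →L[ℝ] Eucl n := (WithLp.sndL 2 ℝ _ _).comp yw
  have hq : IsQuadratic fun z => f (x z) - ⟪x z, y z⟫ + q₂ (y z) + L / 2 * ‖(x - w) z‖ ^ 2 :=
    (((hf.comp x).sub (.inner x y)).add (hq₂.comp y)).add
      ((IsQuadratic.norm_sq (x - w)).const_mul _)
  convert hq.isKLWithExp_half_add_isPolyhedral ((hP₁.comp x).add (hg₂.comp y)) using 2 with z
  change potE f P₁ P₂ L (x z) (y z) (w z) = _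
  rw [potE, hconj, sub_apply]
  simp only [EReal.coe_add, EReal.coe_sub, sub_eq_add_neg (G := EReal)]
  ac_rfl

lemma isPolyhedral_mul_sum_abs {lam : ℝ} (hlam : 0 ≤ lam) :
    IsPolyhedral fun x : Eucl n => ((lam * ∑ i, |x i| : ℝ) : EReal) := by
  simp only [Finset.mul_sum, coe_sum_eq_sum_coe]
  exact .sum _ fun i => (isPolyhedral_mul_abs hlam).comp (EuclideanSpace.proj i)

theorem isKLWithExp_half_potE3_of_rampPenalty {lam μ κ : ℝ} (L : ℝ) (hf : IsQuadratic f)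
    (hP₁ : IsPolyhedral P₁) (hlam : 0 ≤ lam) (hμ : 0 ≤ μ) (hκ : 0 < κ)
    (hP₂ : ∀ x, P₂ x = ∑ i, rampPenalty lam μ κ (x i)) :
    IsKLWithExp (potE3 f P₁ P₂ L) (1 / 2) := by
  have hq₂ : IsQuadratic fun y : Eucl n => κ / 2 * ‖y‖ ^ 2 :=
    (IsQuadratic.norm_sq (.id ℝ (Eucl n))).const_mul _
  have hg₂ : IsPolyhedral fun y : Eucl n =>
      ∑ i, (((μ * |y i| : ℝ) : EReal) + intervalIndicator lam (y i)) :=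
    .sum _ fun i =>
      ((isPolyhedral_mul_abs hμ).add (isPolyhedral_intervalIndicator lam)).comp
        (EuclideanSpace.proj i)
  refine isKLWithExp_half_potE3 L hf hP₁ hq₂ hg₂ fun y => ?_
  simp only [conjE_of_forall_eq_sum hP₂, conjE_rampPenalty hlam hμ hκ]
  rw [Finset.sum_add_distrib, ← coe_sum_eq_sum_coe, EuclideanSpace.real_norm_sq_eq, Finset.mul_sum]

theorem KL_half_potE_MCP_SCAD_general {lam θ : ℝ} (L : ℝ) (hf : IsQuadratic f)
    (hP₁ : IsPolyhedral P₁) (hlam : 0 < lam)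
    (hP₂ :
      (0 < θ ∧ ∀ y : Eucl n,
        P₂ y = lam * ∑ i, ∫ t in (0 : ℝ)..|y i|, min 1 (t / (θ * lam))) ∨
      (1 < θ ∧ ∀ y : Eucl n,
        P₂ y = lam * ∑ i, ∫ t in (0 : ℝ)..|y i|,
          max (min (θ * lam) t - lam) 0 / ((θ - 1) * lam))) :
    IsKLWithExp (potE3 f P₁ P₂ L) (1 / 2) := by
  rcases hP₂ with ⟨hθ, hP₂⟩ | ⟨hθ, hP₂⟩
  · refine isKLWithExp_half_potE3_of_rampPenalty L hf hP₁ hlam.le le_rfl hθ fun x => ?_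
    simp only [hP₂, Finset.mul_sum, mul_integral_mcp hlam hθ]
  · refine isKLWithExp_half_potE3_of_rampPenalty L hf hP₁ hlam.le hlam.le (sub_pos.2 hθ) fun x => ?_
    simp only [hP₂, Finset.mul_sum, mul_integral_scad hlam hθ]

end PotentialFunction

/-- Corollary 4.1: for a convex quadratic `f` and the MCP or SCAD regularizer `P₁ - P₂`, the
potential function `E` is a KL function with exponent `1/2`. -/
theorem KL_half_potE_MCP_SCAD
    {n : ℕ} (f : Eucl n → ℝ) (f' : Eucl n → Eucl n) (P₂ : Eucl n → ℝ)
    (L lam θ : ℝ)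
    (hL : 0 < L)
    (hquad : ∃ (T : Eucl n →ₗ[ℝ] Eucl n) (b : Eucl n) (c : ℝ),
      ∀ y : Eucl n, f y = ⟪y, T y⟫ / 2 + ⟪b, y⟫ + c)
    (hfconv : ConvexOn ℝ Set.univ f)
    (hfgrad : ∀ y, HasGradientAt f (f' y) y)
    (hflip : ∀ y z, ‖f' y - f' z‖ ≤ L * ‖y - z‖)
    (hlam : 0 < lam)
    (hP₂ :
      (1 < θ ∧ ∀ y : Eucl n,
        P₂ y = lam * ∑ i, ∫ t in (0:ℝ)..|y i|, min 1 (t / (θ * lam))) ∨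
      (2 < θ ∧ ∀ y : Eucl n,
        P₂ y = lam * ∑ i, ∫ t in (0:ℝ)..|y i|, max (min (θ * lam) t - lam) 0 / ((θ - 1) * lam))) :
    IsKLWithExp
      (potE3 f (fun y : Eucl n => ((lam * ∑ i, |y i| : ℝ) : EReal)) P₂ L) (1 / 2) := by
  obtain ⟨T, b, c, hf⟩ := hquad
  exact KL_half_potE_MCP_SCAD_general L (.of_inner_linearMap T b c hf)
    (isPolyhedral_mul_sum_abs hlam.le) hlam
    (hP₂.imp (And.imp_left one_pos.trans) (And.imp_left one_lt_two.trans))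
end
end
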